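/- arXiv:2212.05152 — 3 statements merged into one kernel-verified Lean document; each statement's English description precedes it below -/
import Mathlib

section
/- Let X and Y be compact metric spaces and let c : X × P(Y) → (−∞,+∞] be bounded below and lower semicontinuous (P(Y) with the weak* topology), with σ ↦ c(x,σ) proper and convex for each x. Fix μ ∈ P(X). Then: (1) on the set K(μ,ν) of couplings of μ and ν, the map π ↦ ∫_X c(x, π_x) dμ(x) (where (π_x) is a disintegration of π with respect to μ) is convex and lower semicontinuous for the weak* topology on couplings; (2) the optimal weak transport value V_c(μ,ν) := inf{ ∫_X c(x,π_x) dμ(x) : π ∈ K(μ,ν) } is a convex and weak*-lower semicontinuous function of ν ∈ P(Y). -/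
open MeasureTheory Topology Filter Set
open scoped ENNReal NNReal

noncomputable section

/-- The positive part of an extended real number, as an element of `ℝ≥0∞`. -/
def epos (a : EReal) : ℝ≥0∞ := if a = ⊤ then ⊤ else ENNReal.ofReal a.toReal

/-- Signed integral of an `EReal`-valued function (the natural value when `f` is
bounded above or bounded below). -/
def eint {α : Type*} [MeasurableSpace α] (μ : Measure α) (f : α → EReal) : EReal :=
  ((∫⁻ x, epos (f x) ∂μ : ℝ≥0∞) : EReal) - ((∫⁻ x, epos (-(f x)) ∂μ : ℝ≥0∞) : EReal)

/-- The Dirac measure at a point, as a probability measure. -/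
def diracP {α : Type*} [MeasurableSpace α] (x : α) : ProbabilityMeasure α :=
  ⟨Measure.dirac x, inferInstance⟩

/-- `π` is a coupling (transport plan) of `μ` and `ν`. -/
def IsCoupling {X Y : Type*} [MeasurableSpace X] [MeasurableSpace Y]
    (π : ProbabilityMeasure (X × Y)) (μ : ProbabilityMeasure X)
    (ν : ProbabilityMeasure Y) : Prop :=
  (π : Measure (X × Y)).map Prod.fst = (μ : Measure X) ∧
  (π : Measure (X × Y)).map Prod.snd = (ν : Measure Y)

/-- `κ` is a disintegration of the plan `π` with respect to `μ`. -/
def IsDisintegration {X Y : Type*} [MeasurableSpace X] [MeasurableSpace Y]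
    (π : ProbabilityMeasure (X × Y)) (μ : ProbabilityMeasure X)
    (κ : X → ProbabilityMeasure Y) : Prop :=
  Measurable (fun x => (κ x : Measure Y)) ∧
  ∀ (A : Set X) (B : Set Y), MeasurableSet A → MeasurableSet B →
    (π : Measure (X × Y)) (A ×ˢ B) = ∫⁻ x in A, (κ x : Measure Y) B ∂(μ : Measure X)

/-- The cost `π ↦ ∫_X c(x, π_x) dμ(x)` of a transport plan, computed through its
(essentially unique) disintegration with respect to `μ`. -/
def planCost {X Y : Type*} [MeasurableSpace X] [MeasurableSpace Y]
    (μ : ProbabilityMeasure X) (c : X → ProbabilityMeasure Y → EReal)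
    (π : ProbabilityMeasure (X × Y)) : EReal :=
  ⨅ κ ∈ {κ : X → ProbabilityMeasure Y | IsDisintegration π μ κ},
    eint (μ : Measure X) (fun x => c x (κ x))

/-- The optimal weak transport cost `V_c(μ,ν)`. -/
def weakTransport {X Y : Type*} [MeasurableSpace X] [MeasurableSpace Y]
    (c : X → ProbabilityMeasure Y → EReal)
    (μ : ProbabilityMeasure X) (ν : ProbabilityMeasure Y) : EReal :=
  ⨅ π ∈ {π : ProbabilityMeasure (X × Y) | IsCoupling π μ ν}, planCost μ c π

/-!
After subtraction of its lower bound, the cost becomes a nonnegative convex normal integrand `C`.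
An injective mean embedding `σ ↦ ∫ φ dσ` of `ProbabilityMeasure Y` into a Hilbert space `H` sends
a plan `π` to the function `x ↦ ∫ φ dπ_x` in `L²(μ; H)`, whose pairing with a bounded continuous
`g` equals `∫ ⟪g x, φ y⟫ dπ(x, y)`; as such `g` are dense, this function depends weakly
continuously on `π`. The sublevel sets of `κ ↦ ∫ C(x, κ_x) dμ(x)` have convex images in
`L²(μ; H)`, strongly closed by Fatou's lemma along almost everywhere convergent subsequences,
hence weakly closed: the plan cost is lower semicontinuous. The plans with first marginal `μ` form a
compact set, so minimizing over the fibers of the second marginal preserves lower semicontinuity,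
and convexity passes to the minimum through optimal plans.
-/

open ProbabilityTheory

section ExtendedReal

lemma strictMono_coe_add (m : ℝ) : StrictMono fun t : ℝ≥0∞ => (t : EReal) + m := fun _ _ h =>
  EReal.add_lt_add_right_coe (EReal.coe_ennreal_lt_coe_ennreal_iff.2 h) m

lemma continuous_coe_add (m : ℝ) : Continuous fun t : ℝ≥0∞ => (t : EReal) + m :=
  continuous_iff_continuousAt.2 fun t =>
    (EReal.continuousAt_add (p := ((t : EReal), (m : EReal))) (Or.inr (EReal.coe_ne_bot m))
      (Or.inr (EReal.coe_ne_top m))).comp₂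
        continuous_coe_ennreal_ereal.continuousAt continuousAt_const

lemma coe_mul_add_mul_add {a b : ℝ≥0} (hab : a + b = 1) (p q : ℝ≥0∞) (m : ℝ) :
    ((a * p + b * q : ℝ≥0∞) : EReal) + m =
      ((a : ℝ) : EReal) * (p + m) + ((b : ℝ) : EReal) * (q + m) := by
  have hm : (m : EReal) = ((a : ℝ) : EReal) * m + ((b : ℝ) : EReal) * m := by
    rw [← EReal.coe_mul, ← EReal.coe_mul, ← EReal.coe_add, ← add_mul, ← NNReal.coe_add, hab,
      NNReal.coe_one, one_mul]
  have distrib (r : ℝ≥0) (s : ℝ≥0∞) :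
      ((r : ℝ) : EReal) * (s + m) = ((r * s : ℝ≥0∞) : EReal) + ((r : ℝ) : EReal) * m := by
    rw [EReal.left_distrib_of_nonneg_of_ne_top (EReal.coe_nonneg.2 r.coe_nonneg)
      (EReal.coe_ne_top _), EReal.coe_ennreal_mul, EReal.coe_nnreal_eq_coe_real]
  rw [distrib, distrib, add_add_add_comm, ← hm, EReal.coe_ennreal_add]

lemma epos_coe (r : ℝ) : epos r = ENNReal.ofReal r := by
  rw [epos, if_neg (EReal.coe_ne_top r), EReal.toReal_coe]

lemma epos_coe_add (t : ℝ≥0∞) (m : ℝ) :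
    epos (t + m) + ENNReal.ofReal (-m) = t + epos (-(t + m)) + ENNReal.ofReal m := by
  induction t with
  | top => simp [epos]
  | coe t =>
    rw [EReal.coe_nnreal_eq_coe_real, ← EReal.coe_add, ← EReal.coe_neg, epos_coe, epos_coe]
    simp only [ENNReal.ofReal]
    norm_cast
    rw [← NNReal.coe_inj]
    push_cast [Real.coe_toNNReal']
    linarith [max_zero_sub_max_neg_zero_eq_self (t + m : ℝ), max_zero_sub_max_neg_zero_eq_self m]

lemma epos_neg_coe_add_le (t : ℝ≥0∞) (m : ℝ) : epos (-(t + m)) ≤ ENNReal.ofReal (-m) := by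
  induction t with
  | top => simp [epos]
  | coe t =>
    rw [EReal.coe_nnreal_eq_coe_real, ← EReal.coe_add, ← EReal.coe_neg, epos_coe]
    exact ENNReal.ofReal_le_ofReal (neg_le_neg (le_add_of_nonneg_left t.coe_nonneg))

lemma eint_coe_add {α : Type*} [MeasurableSpace α] {μ : Measure α} [IsProbabilityMeasure μ]
    {D : α → ℝ≥0∞} (hD : Measurable D) (m : ℝ) :
    eint μ (fun x => (D x : EReal) + m) = ((∫⁻ x, D x ∂μ : ℝ≥0∞) : EReal) + m := by
  have hfin : ∫⁻ x, epos (-(D x + m)) ∂μ ≠ ⊤ := by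
    refine ne_top_of_le_ne_top ENNReal.ofReal_ne_top (b := ENNReal.ofReal (-m)) ?_
    simpa using lintegral_mono (μ := μ) fun x => epos_neg_coe_add_le (D x) m
  have hbalance : ∫⁻ x, epos (D x + m) ∂μ + ENNReal.ofReal (-m) =
      ∫⁻ x, D x ∂μ + ∫⁻ x, epos (-(D x + m)) ∂μ + ENNReal.ofReal m := by
    have h := lintegral_congr (μ := μ) fun x => epos_coe_add (D x) m
    simpa [lintegral_add_left hD, lintegral_add_right _ measurable_const] using h
  rw [eint]
  lift ∫⁻ x, epos (-(D x + m)) ∂μ to ℝ≥0 using hfin with B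
  have hA : ((∫⁻ x, epos (D x + m) ∂μ : ℝ≥0∞) : EReal) + (max (-m) 0 : ℝ) =
      ((∫⁻ x, D x ∂μ : ℝ≥0∞) : EReal) + (B : ℝ) + (max m 0 : ℝ) := by
    simpa [EReal.coe_nnreal_eq_coe_real, EReal.coe_ennreal_ofReal] using
      congrArg ((↑) : ℝ≥0∞ → EReal) hbalance
  rw [EReal.coe_nnreal_eq_coe_real,
    ← EReal.add_sub_cancel_right (a := ((∫⁻ x, epos (D x + m) ∂μ : ℝ≥0∞) : EReal)), hA,
    sub_eq_add_neg, sub_eq_add_neg, ← EReal.coe_neg, ← EReal.coe_neg]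
  simp only [add_assoc, ← EReal.coe_add]
  congr 2
  linarith [max_zero_sub_max_neg_zero_eq_self m]

lemma eint_congr_ae {α : Type*} [MeasurableSpace α] {μ : Measure α} {f g : α → EReal}
    (h : f =ᵐ[μ] g) : eint μ f = eint μ g := by
  have hpos : ∫⁻ x, epos (f x) ∂μ = ∫⁻ x, epos (g x) ∂μ := lintegral_congr_ae (h.fun_comp epos)
  have hneg : ∫⁻ x, epos (-(f x)) ∂μ = ∫⁻ x, epos (-(g x)) ∂μ :=
    lintegral_congr_ae (h.fun_comp fun e => epos (-e))
  rw [eint, hpos, hneg, eint]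

end ExtendedReal

section MeanEmbedding

lemma integrable_continuousMap {Y E : Type*} [TopologicalSpace Y] [CompactSpace Y]
    [MeasurableSpace Y] [BorelSpace Y] [NormedAddCommGroup E] (φ : C(Y, E)) (σ : Measure Y)
    [IsFiniteMeasure σ] : Integrable φ σ :=
  φ.continuous.integrable_of_hasCompactSupport (HasCompactSupport.of_compactSpace φ)

variable {Y : Type*} [TopologicalSpace Y] [CompactSpace Y] [MeasurableSpace Y]
  {H : Type*} [NormedAddCommGroup H] [InnerProductSpace ℝ H]

/-- The mean embedding `σ ↦ ∫ φ dσ` of probability measures into a Hilbert space `H`, for a feature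
map `φ : Y → H`. When it is injective, norm convergence of the images implies weak convergence of
the measures. -/
def meanEmbedding (φ : C(Y, H)) (σ : ProbabilityMeasure Y) : H := ∫ y, φ y ∂(σ : Measure Y)

lemma norm_meanEmbedding_le (φ : C(Y, H)) (σ : ProbabilityMeasure Y) :
    ‖meanEmbedding φ σ‖ ≤ ‖φ‖ := by
  simpa [meanEmbedding] using
    norm_integral_le_of_norm_le_const (μ := (σ : Measure Y)) (ae_of_all _ φ.norm_coe_le_norm)

variable [BorelSpace Y]

lemma stronglyMeasurable_meanEmbedding (φ : C(Y, H)) : StronglyMeasurable (meanEmbedding φ) :=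
  StronglyMeasurable.integral_kernel
    (κ := ⟨((↑) : ProbabilityMeasure Y → Measure Y), measurable_subtype_coe⟩)
    (φ.continuous.stronglyMeasurable_of_hasCompactSupport (HasCompactSupport.of_compactSpace φ))

lemma inner_meanEmbedding [CompleteSpace H] (φ : C(Y, H)) (h : H) (σ : ProbabilityMeasure Y) :
    inner ℝ h (meanEmbedding φ σ) = ∫ y, inner ℝ h (φ y) ∂(σ : Measure Y) :=
  (integral_inner (integrable_continuousMap φ (σ : Measure Y)) h).symm

lemma continuous_inner_meanEmbedding [CompleteSpace H] (φ : C(Y, H)) (h : H) :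
    Continuous fun σ => inner ℝ h (meanEmbedding φ σ) := by
  simp only [inner_meanEmbedding]
  exact ProbabilityMeasure.continuous_integral_continuousMap
    (⟨fun y => inner ℝ h (φ y), by fun_prop⟩ : C(Y, ℝ))

variable [T2Space Y] [CompleteSpace H]

-- Inner products against a fixed vector already determine the topology of the compact space
-- `ProbabilityMeasure Y`, and they are norm continuous.
lemma exists_isOpen_preimage_meanEmbedding {φ : C(Y, H)}
    (hφ : Function.Injective (meanEmbedding φ)) {U : Set (ProbabilityMeasure Y)} (hU : IsOpen U) :
    ∃ V : Set H, IsOpen V ∧ meanEmbedding φ ⁻¹' V = U := by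
  have hemb : IsClosedEmbedding fun σ h => inner ℝ h (meanEmbedding φ σ) :=
    (continuous_pi (continuous_inner_meanEmbedding φ)).isClosedEmbedding fun σ τ hστ =>
      hφ (ext_inner_left ℝ fun h => congrFun hστ h)
  obtain ⟨W, hW, rfl⟩ := hemb.isInducing.isOpen_iff.1 hU
  exact ⟨(fun v h => inner ℝ h v) ⁻¹' W, hW.preimage (by fun_prop), rfl⟩

lemma tendsto_of_tendsto_meanEmbedding {φ : C(Y, H)} (hφ : Function.Injective (meanEmbedding φ))
    {ι : Type*} {l : Filter ι} {σs : ι → ProbabilityMeasure Y} {σ : ProbabilityMeasure Y}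
    (h : Tendsto (fun i => meanEmbedding φ (σs i)) l (𝓝 (meanEmbedding φ σ))) :
    Tendsto σs l (𝓝 σ) := by
  refine tendsto_nhds.2 fun U hU hσ => ?_
  obtain ⟨V, hV, rfl⟩ := exists_isOpen_preimage_meanEmbedding hφ hU
  exact h (hV.mem_nhds hσ)

lemma opensMeasurableSpace_of_injective_meanEmbedding {φ : C(Y, H)}
    (hφ : Function.Injective (meanEmbedding φ)) : OpensMeasurableSpace (ProbabilityMeasure Y) where
  borel_le := MeasurableSpace.generateFrom_le fun U hU => by
    borelize H
    obtain ⟨V, hV, rfl⟩ := exists_isOpen_preimage_meanEmbedding hφ hU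
    exact (stronglyMeasurable_meanEmbedding φ).measurable hV.measurableSet

end MeanEmbedding

section CharacteristicFeature

variable {Y : Type*} [TopologicalSpace Y] [CompactSpace Y] [MeasurableSpace Y] [BorelSpace Y]

lemma continuous_integral_left (σ : Measure Y) [IsProbabilityMeasure σ] :
    Continuous fun f : C(Y, ℝ) => ∫ y, f y ∂σ := by
  refine (LipschitzWith.of_dist_le_mul (K := 1) fun f g => ?_).continuous
  rw [dist_eq_norm, dist_eq_norm,
    ← integral_sub (integrable_continuousMap f σ) (integrable_continuousMap g σ)]
  simpa using norm_integral_le_of_norm_le_const (μ := σ) (ae_of_all _ (f - g).norm_coe_le_norm)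

lemma ext_of_denseRange_integral [HasOuterApproxClosed Y] {ι : Type*} {f : ι → C(Y, ℝ)}
    (hf : DenseRange f) {σ τ : ProbabilityMeasure Y}
    (h : ∀ i, ∫ y, f i y ∂(σ : Measure Y) = ∫ y, f i y ∂(τ : Measure Y)) : σ = τ := by
  have hint : (fun g : C(Y, ℝ) => ∫ y, g y ∂(σ : Measure Y)) =
      fun g => ∫ y, g y ∂(τ : Measure Y) :=
    hf.equalizer (continuous_integral_left (σ : Measure Y))
      (continuous_integral_left (τ : Measure Y)) (funext h)
  exact ProbabilityMeasure.toMeasure_injective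
    (ext_of_forall_integral_eq_of_IsFiniteMeasure fun g => congrFun hint g.toContinuousMap)

lemma exists_inner_eq_of_seq {Y : Type*} [TopologicalSpace Y] [CompactSpace Y] (f : ℕ → C(Y, ℝ)) :
    ∃ φ : C(Y, lp (fun _ : ℕ => ℝ) 2), ∀ n, ∃ h, ∀ y, inner ℝ h (φ y) = f n y := by
  let w (n : ℕ) : ℝ := (1 / 2) ^ n / (1 + ‖f n‖)
  let term (n : ℕ) (y : Y) : lp (fun _ : ℕ => ℝ) 2 := lp.single 2 n (w n * f n y)
  have hw (n : ℕ) : 0 < w n := by positivity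
  have hterm (n : ℕ) (y : Y) : ‖term n y‖ ≤ (1 / 2) ^ n := by
    rw [lp.norm_single (by simp), norm_mul, Real.norm_of_nonneg (hw n).le, div_mul_eq_mul_div,
      div_le_iff₀ (by positivity)]
    gcongr
    linarith [(f n).norm_coe_le_norm y]
  have hcont (n : ℕ) : Continuous (term n) :=
    (lp.isometry_single n).continuous.comp (by fun_prop)
  refine ⟨⟨fun y => ∑' n, term n y, continuous_tsum hcont summable_geometric_two hterm⟩,
    fun n => ⟨(w n)⁻¹ • lp.single 2 n 1, fun y => ?_⟩⟩
  have hsum : Summable fun k => term k y := .of_norm_bounded summable_geometric_two (hterm · y)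
  have hcoord : (∑' k, term k y : lp (fun _ : ℕ => ℝ) 2) n = w n * f n y := by
    calc _ = ∑' k, term k y n := (lp.evalCLM ℝ (fun _ : ℕ => ℝ) 2 n).map_tsum hsum
      _ = term n y n := tsum_eq_single n fun k hk => lp.single_apply_ne 2 k _ hk.symm
      _ = w n * f n y := lp.single_apply_self 2 n _
  rw [real_inner_smul_left, lp.inner_single_left, ContinuousMap.coe_mk, hcoord]
  simp [(hw n).ne']

lemma exists_injective_meanEmbedding (Y : Type*) [TopologicalSpace Y] [CompactSpace Y]
    [TopologicalSpace.MetrizableSpace Y] [MeasurableSpace Y] [BorelSpace Y] :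
    ∃ φ : C(Y, lp (fun _ : ℕ => ℝ) 2), Function.Injective (meanEmbedding φ) := by
  obtain ⟨φ, hφ⟩ := exists_inner_eq_of_seq (TopologicalSpace.denseSeq C(Y, ℝ))
  refine ⟨φ, fun σ τ hστ =>
    ext_of_denseRange_integral (TopologicalSpace.denseRange_denseSeq _) fun n => ?_⟩
  obtain ⟨h, hn⟩ := hφ n
  simp only [← hn, ← inner_meanEmbedding, hστ]

instance (Y : Type*) [TopologicalSpace Y] [CompactSpace Y]
    [TopologicalSpace.MetrizableSpace Y] [MeasurableSpace Y] [BorelSpace Y] :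
    OpensMeasurableSpace (ProbabilityMeasure Y) :=
  opensMeasurableSpace_of_injective_meanEmbedding (exists_injective_meanEmbedding Y).choose_spec

end CharacteristicFeature

section Disintegration

variable {X Y : Type*} [MeasurableSpace X] [MeasurableSpace Y] {π : ProbabilityMeasure (X × Y)}
  {μ : ProbabilityMeasure X} {κ : X → ProbabilityMeasure Y}

/-- A measurable family of probability measures, as a Markov kernel. -/
def toKernel (κ : X → ProbabilityMeasure Y) (hκ : Measurable κ) : Kernel X Y :=
  ⟨fun x => (κ x : Measure Y), measurable_subtype_coe.comp hκ⟩

instance (κ : X → ProbabilityMeasure Y) (hκ : Measurable κ) : IsMarkovKernel (toKernel κ hκ) :=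
  ⟨fun x => inferInstanceAs (IsProbabilityMeasure (κ x : Measure Y))⟩

lemma IsDisintegration.measurable (h : IsDisintegration π μ κ) : Measurable κ := h.1.subtype_mk

lemma IsDisintegration.eq_compProd (h : IsDisintegration π μ κ) :
    (π : Measure (X × Y)) = (μ : Measure X) ⊗ₘ toKernel κ h.measurable :=
  Measure.ext_prod fun {s t} hs ht => by
    rw [h.2 s t hs ht, Measure.compProd_apply_prod hs ht]
    rfl

lemma IsDisintegration.ae_eq [MeasurableSpace.CountablyGenerated Y]
    {η : X → ProbabilityMeasure Y} (h : IsDisintegration π μ κ) (h' : IsDisintegration π μ η) :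
    κ =ᵐ[(μ : Measure X)] η := by
  filter_upwards [Kernel.ae_eq_of_compProd_eq (h.eq_compProd.symm.trans h'.eq_compProd)] with x hx
  exact ProbabilityMeasure.toMeasure_injective hx

lemma IsDisintegration.planCost_eq [MeasurableSpace.CountablyGenerated Y]
    (h : IsDisintegration π μ κ) (c : X → ProbabilityMeasure Y → EReal) :
    planCost μ c π = eint (μ : Measure X) fun x => c x (κ x) := by
  refine le_antisymm (iInf₂_le κ h) (le_iInf₂ fun η hη => (eint_congr_ae ?_).le)
  filter_upwards [h.ae_eq hη] with x hx
  rw [hx]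

/-- The transport plans with first marginal `μ`. -/
def plansFrom (μ : ProbabilityMeasure X) : Set (ProbabilityMeasure (X × Y)) :=
  {π | (π : Measure (X × Y)).map Prod.fst = μ}

lemma isCoupling_prod (μ : ProbabilityMeasure X) (ν : ProbabilityMeasure Y) :
    IsCoupling (μ.prod ν) μ ν :=
  ⟨by simp [ProbabilityMeasure.toMeasure_prod], by simp [ProbabilityMeasure.toMeasure_prod]⟩

lemma setOf_isCoupling_eq (μ : ProbabilityMeasure X) (ν : ProbabilityMeasure Y) :
    {π | IsCoupling π μ ν} =
      plansFrom μ ∩ (fun π => π.map measurable_snd.aemeasurable) ⁻¹' {ν} := by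
  ext π
  exact and_congr Iff.rfl (ProbabilityMeasure.toMeasure_injective.eq_iff
    (a := π.map measurable_snd.aemeasurable) (b := ν))

variable [StandardBorelSpace Y]

/-- The conditional laws `x ↦ π_x` of a probability measure on a product, as a family of elements of
`ProbabilityMeasure Y`. They disintegrate `π` with respect to its first marginal. -/
def condProb (π : ProbabilityMeasure (X × Y)) (x : X) : ProbabilityMeasure Y :=
  haveI : Nonempty Y := ⟨π.nonempty.some.2⟩
  ⟨(π : Measure (X × Y)).condKernel x, inferInstance⟩

lemma isDisintegration_condProb (h : π ∈ plansFrom μ) :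
    IsDisintegration π μ (condProb π) := by
  have : Nonempty Y := ⟨π.nonempty.some.2⟩
  refine ⟨(π : Measure (X × Y)).condKernel.measurable, fun A B hA hB => ?_⟩
  conv_lhs => rw [← (π : Measure (X × Y)).disintegrate (π : Measure (X × Y)).condKernel,
    Measure.compProd_apply_prod hA hB, Measure.fst, h.out]
  rfl

lemma measurable_condProb (π : ProbabilityMeasure (X × Y)) : Measurable (condProb π) :=
  (isDisintegration_condProb (μ := π.map measurable_fst.aemeasurable) rfl).measurable

end Disintegration

section ConvexComb

variable {X Y : Type*} [MeasurableSpace X] [MeasurableSpace Y] {a b : ℝ≥0}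

/-- The convex combination `a σ + b τ` of two probability measures. -/
def convexComb (a b : ℝ≥0) (hab : a + b = 1) (σ τ : ProbabilityMeasure Y) : ProbabilityMeasure Y :=
  ⟨a • (σ : Measure Y) + b • (τ : Measure Y), ⟨by
    simp only [Measure.add_apply, Measure.smul_apply, measure_univ, ENNReal.smul_def, smul_eq_mul,
      mul_one]
    exact_mod_cast hab⟩⟩

lemma coe_convexComb (hab : a + b = 1) (σ τ : ProbabilityMeasure Y) :
    (convexComb a b hab σ τ : Measure Y) = a • (σ : Measure Y) + b • (τ : Measure Y) := rfl

lemma measurable_convexComb (hab : a + b = 1) {κ₁ κ₂ : X → ProbabilityMeasure Y}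
    (h₁ : Measurable κ₁) (h₂ : Measurable κ₂) :
    Measurable fun x => convexComb a b hab (κ₁ x) (κ₂ x) := by
  refine Measurable.subtype_mk (Measure.measurable_of_measurable_coe _ fun s hs => ?_)
  simp only [Measure.add_apply, Measure.smul_apply]
  exact (((Measure.measurable_coe hs).comp (measurable_subtype_coe.comp h₁)).const_smul a).add
    (((Measure.measurable_coe hs).comp (measurable_subtype_coe.comp h₂)).const_smul b)

lemma isDisintegration_convexComb {π₁ π₂ : ProbabilityMeasure (X × Y)}
    {μ : ProbabilityMeasure X} {κ₁ κ₂ : X → ProbabilityMeasure Y} (hab : a + b = 1)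
    (h₁ : IsDisintegration π₁ μ κ₁) (h₂ : IsDisintegration π₂ μ κ₂) :
    IsDisintegration (convexComb a b hab π₁ π₂) μ fun x => convexComb a b hab (κ₁ x) (κ₂ x) := by
  refine ⟨measurable_subtype_coe.comp (measurable_convexComb hab h₁.measurable h₂.measurable),
    fun A B hA hB => ?_⟩
  have m₁ : Measurable fun x => (κ₁ x : Measure Y) B := (Measure.measurable_coe hB).comp h₁.1
  have m₂ : Measurable fun x => (κ₂ x : Measure Y) B := (Measure.measurable_coe hB).comp h₂.1
  simp only [coe_convexComb, Measure.add_apply, Measure.smul_apply, h₁.2 A B hA hB,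
    h₂.2 A B hA hB, ENNReal.smul_def, smul_eq_mul]
  rw [lintegral_add_left (m₁.const_mul _), lintegral_const_mul _ m₁, lintegral_const_mul _ m₂]

lemma map_convexComb (hab : a + b = 1) (σ τ : ProbabilityMeasure Y) {f : Y → X}
    (hf : Measurable f) : (convexComb a b hab σ τ : Measure Y).map f =
      a • (σ : Measure Y).map f + b • (τ : Measure Y).map f := by
  rw [coe_convexComb, Measure.map_add _ _ hf, Measure.map_smul, Measure.map_smul]

lemma isCoupling_convexComb {π₁ π₂ : ProbabilityMeasure (X × Y)} {μ : ProbabilityMeasure X}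
    {ν₁ ν₂ : ProbabilityMeasure Y} (hab : a + b = 1) (h₁ : IsCoupling π₁ μ ν₁)
    (h₂ : IsCoupling π₂ μ ν₂) :
    IsCoupling (convexComb a b hab π₁ π₂) μ (convexComb a b hab ν₁ ν₂) := by
  constructor
  · rw [map_convexComb hab _ _ measurable_fst, h₁.1, h₂.1, ← add_smul, hab, one_smul]
  · rw [map_convexComb hab _ _ measurable_snd, h₁.2, h₂.2, coe_convexComb]

lemma integral_convexComb {E : Type*} [NormedAddCommGroup E] [NormedSpace ℝ E] (hab : a + b = 1)
    {σ τ : ProbabilityMeasure Y} {f : Y → E} (hσ : Integrable f (σ : Measure Y))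
    (hτ : Integrable f (τ : Measure Y)) :
    ∫ y, f y ∂(convexComb a b hab σ τ : Measure Y) =
      (a : ℝ) • ∫ y, f y ∂(σ : Measure Y) + (b : ℝ) • ∫ y, f y ∂(τ : Measure Y) := by
  rw [coe_convexComb, integral_add_measure hσ.smul_measure_nnreal hτ.smul_measure_nnreal,
    integral_smul_nnreal_measure, integral_smul_nnreal_measure, NNReal.smul_def, NNReal.smul_def]

end ConvexComb

section ConvexNormalIntegrand

variable {X Y : Type*} [MeasurableSpace X] [TopologicalSpace Y] [MeasurableSpace Y]
  [OpensMeasurableSpace Y]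

/-- A convex normal integrand: a jointly measurable cost with values in `[0, ∞]` that is convex and
weakly lower semicontinuous in its measure argument. -/
structure ConvexNormalIntegrand (C : X → ProbabilityMeasure Y → ℝ≥0∞) : Prop where
  measurable : Measurable fun p : X × ProbabilityMeasure Y => C p.1 p.2
  lowerSemicontinuous (x : X) : LowerSemicontinuous (C x)
  le_convexComb (x : X) {a b : ℝ≥0} (hab : a + b = 1) (σ τ : ProbabilityMeasure Y) :
    C x (convexComb a b hab σ τ) ≤ a * C x σ + b * C x τ

lemma exists_convexNormalIntegrand {c : X → ProbabilityMeasure Y → EReal} {m : ℝ}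
    (hm : ∀ x σ, (m : EReal) ≤ c x σ)
    (hmeas : Measurable fun p : X × ProbabilityMeasure Y => c p.1 p.2)
    (hlsc : ∀ x, LowerSemicontinuous (c x))
    (hconv : ∀ (x : X) (σ₁ σ₂ τ : ProbabilityMeasure Y) (a b : ℝ≥0), a + b = 1 →
      (τ : Measure Y) = a • (σ₁ : Measure Y) + b • (σ₂ : Measure Y) →
      c x τ ≤ ((a : ℝ) : EReal) * c x σ₁ + ((b : ℝ) : EReal) * c x σ₂) :
    ∃ C, ConvexNormalIntegrand C ∧ c = fun x σ => (C x σ : EReal) + m := by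
  have hmono : Monotone fun e : EReal => (e - m).toENNReal := fun _ _ h =>
    EReal.toENNReal_le_toENNReal (EReal.sub_le_sub h le_rfl)
  have hc (x : X) (σ : ProbabilityMeasure Y) : ((c x σ - m).toENNReal : EReal) + m = c x σ := by
    rw [EReal.coe_toENNReal (EReal.sub_nonneg (by simp) (by simp) |>.2 (hm x σ)),
      EReal.sub_add_cancel]
  refine ⟨fun x σ => (c x σ - m).toENNReal, ⟨hmono.measurable.comp hmeas, fun x σ t ht => ?_,
    fun x a b hab σ τ => ?_⟩, funext₂ fun x σ => (hc x σ).symm⟩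
  · have hlt : (t : EReal) + m < c x σ := hc x σ ▸ strictMono_coe_add m ht
    filter_upwards [hlsc x σ _ hlt] with τ hτ
    exact (strictMono_coe_add m).lt_iff_lt.1 (hτ.trans_eq (hc x τ).symm)
  · rw [← (strictMono_coe_add m).le_iff_le, hc, coe_mul_add_mul_add hab, hc, hc]
    exact hconv x σ τ _ a b hab rfl

namespace ConvexNormalIntegrand

variable {C : X → ProbabilityMeasure Y → ℝ≥0∞} {κ κ₁ κ₂ : X → ProbabilityMeasure Y}

lemma measurable_comp (hC : ConvexNormalIntegrand C) (hκ : Measurable κ) :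
    Measurable fun x => C x (κ x) :=
  hC.measurable.comp (measurable_id.prodMk hκ)

lemma lintegral_convexComb_le (hC : ConvexNormalIntegrand C) (μ : Measure X) {a b : ℝ≥0}
    (hab : a + b = 1) (h₁ : Measurable κ₁) (h₂ : Measurable κ₂) :
    ∫⁻ x, C x (convexComb a b hab (κ₁ x) (κ₂ x)) ∂μ ≤
      a * ∫⁻ x, C x (κ₁ x) ∂μ + b * ∫⁻ x, C x (κ₂ x) ∂μ := by
  have m₁ := hC.measurable_comp h₁
  have m₂ := hC.measurable_comp h₂
  rw [← lintegral_const_mul _ m₁, ← lintegral_const_mul _ m₂,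
    ← lintegral_add_left (m₁.const_mul _)]
  exact lintegral_mono fun x => hC.le_convexComb x hab (κ₁ x) (κ₂ x)

lemma lintegral_le_liminf (hC : ConvexNormalIntegrand C) {μ : Measure X}
    {κs : ℕ → X → ProbabilityMeasure Y} (hκs : ∀ k, Measurable (κs k))
    (hlim : ∀ᵐ x ∂μ, Tendsto (fun k => κs k x) atTop (𝓝 (κ x))) :
    ∫⁻ x, C x (κ x) ∂μ ≤ liminf (fun k => ∫⁻ x, C x (κs k x) ∂μ) atTop := by
  calc ∫⁻ x, C x (κ x) ∂μ ≤ ∫⁻ x, liminf (fun k => C x (κs k x)) atTop ∂μ := by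
        refine lintegral_mono_ae ?_
        filter_upwards [hlim] with x hx
        exact ((hC.lowerSemicontinuous x).lowerSemicontinuousAt (κ x)).le_liminf.trans
          (liminf_le_liminf_of_le hx)
    _ ≤ liminf (fun k => ∫⁻ x, C x (κs k x) ∂μ) atTop :=
        lintegral_liminf_le fun k => hC.measurable_comp (hκs k)

lemma planCost_eq [MeasurableSpace.CountablyGenerated Y] (hC : ConvexNormalIntegrand C) (m : ℝ)
    {π : ProbabilityMeasure (X × Y)} {μ : ProbabilityMeasure X} (hκ : IsDisintegration π μ κ) :
    planCost μ (fun x σ => (C x σ : EReal) + m) π =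
      ((∫⁻ x, C x (κ x) ∂(μ : Measure X) : ℝ≥0∞) : EReal) + m := by
  rw [hκ.planCost_eq, eint_coe_add (hC.measurable_comp hκ.measurable)]

lemma planCost_convexComb_le [StandardBorelSpace Y] (hC : ConvexNormalIntegrand C) (m : ℝ)
    {μ : ProbabilityMeasure X} {π₁ π₂ : ProbabilityMeasure (X × Y)} {a b : ℝ≥0} (hab : a + b = 1)
    (h₁ : π₁ ∈ plansFrom μ) (h₂ : π₂ ∈ plansFrom μ) :
    planCost μ (fun x σ => (C x σ : EReal) + m) (convexComb a b hab π₁ π₂) ≤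
      ((a : ℝ) : EReal) * planCost μ (fun x σ => (C x σ : EReal) + m) π₁ +
        ((b : ℝ) : EReal) * planCost μ (fun x σ => (C x σ : EReal) + m) π₂ := by
  have d₁ := isDisintegration_condProb h₁
  have d₂ := isDisintegration_condProb h₂
  rw [hC.planCost_eq m d₁, hC.planCost_eq m d₂,
    hC.planCost_eq m (isDisintegration_convexComb hab d₁ d₂), ← coe_mul_add_mul_add hab]
  exact (strictMono_coe_add m).monotone
    (hC.lintegral_convexComb_le μ hab d₁.measurable d₂.measurable)

end ConvexNormalIntegrand

end ConvexNormalIntegrand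

section WeakContinuity

lemma continuousOn_dual_of_denseRange {T E ι : Type*} [TopologicalSpace T] [NormedAddCommGroup E]
    [InnerProductSpace ℝ E] [CompleteSpace E] {F : T → E} {R : ℝ≥0} (hR : ∀ t, ‖F t‖ ≤ R)
    {g : ι → E} (hg : DenseRange g) {K : Set T}
    (hF : ∀ i, ContinuousOn (fun t => inner ℝ (g i) (F t)) K) (l : StrongDual ℝ E) :
    ContinuousOn (fun t => l (F t)) K := by
  intro t₀ ht₀
  obtain ⟨w, rfl⟩ := (InnerProductSpace.toDual ℝ E).surjective l
  have hequi : Equicontinuous fun t w => inner ℝ w (F t) := by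
    refine (LipschitzWith.uniformEquicontinuous _ R fun t => ?_).equicontinuous
    refine LipschitzWith.of_dist_le_mul fun v w => ?_
    rw [dist_eq_norm, ← inner_sub_left, dist_eq_norm, mul_comm]
    exact (norm_inner_le_norm _ _).trans (by gcongr; exact hR t)
  have hclosed : IsClosed
      {w | Tendsto (fun t => inner ℝ w (F t)) (𝓝[K] t₀) (𝓝 (inner ℝ w (F t₀)))} :=
    hequi.isClosed_setOfPred_tendsto (by fun_prop)
  exact hg.induction_on
    (p := fun w => Tendsto (fun t => inner ℝ w (F t)) (𝓝[K] t₀) (𝓝 (inner ℝ w (F t₀)))) w hclosed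
    fun i => hF i t₀ ht₀

-- By Hahn–Banach, a convex set and its weak closure lie in the same closed half-spaces, so strong
-- closedness of the sublevel sets is enough.
lemma lowerSemicontinuousOn_of_convex_sublevel {T E γ : Type*} [TopologicalSpace T]
    [NormedAddCommGroup E] [NormedSpace ℝ E] [LinearOrder γ] {F : T → E} {K : Set T}
    (hF : ∀ l : StrongDual ℝ E, ContinuousOn (fun t => l (F t)) K) {J : T → γ} {S : γ → Set E}
    (hconv : ∀ s, Convex ℝ (S s)) (hmem : ∀ t ∈ K, ∀ s, J t ≤ s → F t ∈ S s)
    (hclosure : ∀ t ∈ K, ∀ s, F t ∈ closure (S s) → J t ≤ s) : LowerSemicontinuousOn J K := by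
  intro t₀ ht₀ s hs
  obtain ⟨l, u, hlu, hul⟩ := geometric_hahn_banach_point_closed (hconv s).closure isClosed_closure
    fun h => hs.not_ge (hclosure t₀ ht₀ s h)
  filter_upwards [(hF l t₀ ht₀).eventually_lt_const hlu, self_mem_nhdsWithin] with t ht htK
  by_contra hts
  exact (hul _ (subset_closure (hmem t htK s (not_lt.1 hts)))).not_gt ht

end WeakContinuity

section KernelMean

variable {X Y H : Type*} [MeasurableSpace X] [TopologicalSpace Y] [CompactSpace Y]
  [MeasurableSpace Y] [BorelSpace Y] [NormedAddCommGroup H] [InnerProductSpace ℝ H]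
  {κ κ₁ κ₂ : X → ProbabilityMeasure Y}

lemma memLp_meanEmbedding (φ : C(Y, H)) (μ : Measure X) [IsFiniteMeasure μ] (hκ : Measurable κ) :
    MemLp (fun x => meanEmbedding φ (κ x)) 2 μ :=
  MemLp.of_bound ((stronglyMeasurable_meanEmbedding φ).comp_measurable hκ).aestronglyMeasurable ‖φ‖
    (ae_of_all _ fun x => norm_meanEmbedding_le φ (κ x))

/-- The mean embedding of a measurable family of probability measures, as an element of
`L²(μ; H)`. -/
def kernelMean (φ : C(Y, H)) (μ : Measure X) [IsFiniteMeasure μ] (hκ : Measurable κ) : Lp H 2 μ :=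
  (memLp_meanEmbedding φ μ hκ).toLp

lemma coeFn_kernelMean (φ : C(Y, H)) (μ : Measure X) [IsFiniteMeasure μ] (hκ : Measurable κ) :
    kernelMean φ μ hκ =ᵐ[μ] fun x => meanEmbedding φ (κ x) :=
  (memLp_meanEmbedding φ μ hκ).coeFn_toLp

lemma norm_kernelMean_le (φ : C(Y, H)) (μ : Measure X) [IsProbabilityMeasure μ]
    (hκ : Measurable κ) : ‖kernelMean φ μ hκ‖ ≤ ‖φ‖ := by
  refine (Lp.norm_le_of_ae_bound (norm_nonneg φ) ?_).trans_eq (by simp [measureUnivNNReal])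
  filter_upwards [coeFn_kernelMean φ μ hκ] with x hx
  exact hx ▸ norm_meanEmbedding_le φ (κ x)

lemma kernelMean_convexComb (φ : C(Y, H)) (μ : Measure X) [IsFiniteMeasure μ] {a b : ℝ≥0}
    (hab : a + b = 1) (h₁ : Measurable κ₁) (h₂ : Measurable κ₂) :
    kernelMean φ μ (measurable_convexComb hab h₁ h₂) =
      (a : ℝ) • kernelMean φ μ h₁ + (b : ℝ) • kernelMean φ μ h₂ := by
  rw [kernelMean, kernelMean, kernelMean, ← MemLp.toLp_const_smul, ← MemLp.toLp_const_smul,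
    ← MemLp.toLp_add]
  congr 1
  ext x
  exact integral_convexComb hab (integrable_continuousMap φ _) (integrable_continuousMap φ _)

/-- The bounded continuous function `(x, y) ↦ ⟪g x, φ y⟫`. -/
def innerProd [TopologicalSpace X] (g : BoundedContinuousFunction X H) (φ : C(Y, H)) :
    BoundedContinuousFunction (X × Y) ℝ :=
  BoundedContinuousFunction.ofNormedAddCommGroup (fun p => inner ℝ (g p.1) (φ p.2)) (by fun_prop)
    (‖g‖ * ‖φ‖) fun p => (norm_inner_le_norm _ _).trans
      (mul_le_mul (g.norm_coe_le_norm p.1) (φ.norm_coe_le_norm p.2) (norm_nonneg _) (norm_nonneg _))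

variable [TopologicalSpace X] [BorelSpace X] [SecondCountableTopology X] [CompleteSpace H]

-- Disintegrating `π` turns the pairing in `L²(μ; H)` into an integral against `π` itself, which no
-- longer involves the kernel.
lemma inner_toLp_kernelMean {π : ProbabilityMeasure (X × Y)} {μ : ProbabilityMeasure X}
    (h : IsDisintegration π μ κ) (g : BoundedContinuousFunction X H) (φ : C(Y, H)) :
    inner ℝ (BoundedContinuousFunction.toLp 2 (μ : Measure X) ℝ g)
        (kernelMean φ (μ : Measure X) h.measurable) =
      ∫ p, innerProd g φ p ∂(π : Measure (X × Y)) := by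
  rw [L2.inner_def, h.eq_compProd, Measure.integral_compProd ((innerProd g φ).integrable _)]
  refine integral_congr_ae ?_
  filter_upwards [BoundedContinuousFunction.coeFn_toLp (𝕜 := ℝ) (p := 2) (μ : Measure X) g,
    coeFn_kernelMean φ (μ : Measure X) h.measurable] with x hg hm
  rw [hg, hm]
  exact inner_meanEmbedding φ (g x) (κ x)

lemma continuousOn_dual_kernelMean_condProb [RegularSpace X] [StandardBorelSpace Y] (φ : C(Y, H))
    (μ : ProbabilityMeasure X) (l : StrongDual ℝ (Lp H 2 (μ : Measure X))) :
    ContinuousOn (fun π => l (kernelMean φ (μ : Measure X) (measurable_condProb π)))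
      (plansFrom μ) := by
  have hdense : DenseRange (BoundedContinuousFunction.toLp (E := H) 2 (μ : Measure X) ℝ) :=
    BoundedContinuousFunction.toLp_denseRange H (μ : Measure X) ℝ (by simp)
  have hpair (g : BoundedContinuousFunction X H) : ContinuousOn
      (fun π => inner ℝ (BoundedContinuousFunction.toLp 2 (μ : Measure X) ℝ g)
        (kernelMean φ (μ : Measure X) (measurable_condProb π)))
      (plansFrom μ) :=
    (ProbabilityMeasure.continuous_integral_boundedContinuousFunction
      (innerProd g φ)).continuousOn.congr fun π hπ =>
        inner_toLp_kernelMean (isDisintegration_condProb hπ) g φ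
  have hR (π : ProbabilityMeasure (X × Y)) :
      ‖kernelMean φ (μ : Measure X) (measurable_condProb π)‖ ≤ ‖φ‖₊ :=
    norm_kernelMean_le φ _ _
  exact continuousOn_dual_of_denseRange hR hdense hpair l

end KernelMean

section Semicontinuity

variable {X Y H : Type*} [MeasurableSpace X] [TopologicalSpace Y] [CompactSpace Y]
  [MeasurableSpace Y] [BorelSpace Y] [NormedAddCommGroup H] [InnerProductSpace ℝ H]
  {C : X → ProbabilityMeasure Y → ℝ≥0∞}

/-- The mean embeddings in `L²(μ; H)` of the measurable families `κ` with
`∫ C(x, κ_x) dμ(x) ≤ t`. -/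
def kernelMeanSublevel (φ : C(Y, H)) (μ : Measure X) [IsFiniteMeasure μ]
    (C : X → ProbabilityMeasure Y → ℝ≥0∞) (t : ℝ≥0∞) : Set (Lp H 2 μ) :=
  {f | ∃ (κ : X → ProbabilityMeasure Y) (hκ : Measurable κ),
    ∫⁻ x, C x (κ x) ∂μ ≤ t ∧ kernelMean φ μ hκ = f}

lemma ConvexNormalIntegrand.convex_kernelMeanSublevel (hC : ConvexNormalIntegrand C)
    (φ : C(Y, H)) (μ : Measure X) [IsFiniteMeasure μ] (t : ℝ≥0∞) :
    Convex ℝ (kernelMeanSublevel φ μ C t) := by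
  rintro _ ⟨κ₁, h₁, ht₁, rfl⟩ _ ⟨κ₂, h₂, ht₂, rfl⟩ a b ha hb hab
  lift a to ℝ≥0 using ha
  lift b to ℝ≥0 using hb
  norm_cast at hab
  refine ⟨_, measurable_convexComb hab h₁ h₂, ?_, kernelMean_convexComb φ μ hab h₁ h₂⟩
  calc ∫⁻ x, C x (convexComb a b hab (κ₁ x) (κ₂ x)) ∂μ
      ≤ a * ∫⁻ x, C x (κ₁ x) ∂μ + b * ∫⁻ x, C x (κ₂ x) ∂μ :=
        hC.lintegral_convexComb_le μ hab h₁ h₂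
    _ ≤ a * t + b * t := by gcongr
    _ = t := by rw [← add_mul]; norm_cast; rw [hab, ENNReal.coe_one, one_mul]

lemma exists_seq_tendsto_ae_of_tendsto_kernelMean [T2Space Y] [CompleteSpace H]
    {μ : Measure X} [IsFiniteMeasure μ] {φ : C(Y, H)}
    (hφ : Function.Injective (meanEmbedding φ)) {κ : X → ProbabilityMeasure Y}
    (hκ : Measurable κ) {κs : ℕ → X → ProbabilityMeasure Y} (hκs : ∀ n, Measurable (κs n))
    (hlim : Tendsto (fun n => kernelMean φ μ (hκs n)) atTop (𝓝 (kernelMean φ μ hκ))) :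
    ∃ k : ℕ → ℕ, ∀ᵐ x ∂μ, Tendsto (fun n => κs (k n) x) atTop (𝓝 (κ x)) := by
  obtain ⟨k, -, hk⟩ := (tendstoInMeasure_of_tendsto_Lp hlim).exists_seq_tendsto_ae
  refine ⟨k, ?_⟩
  filter_upwards [hk, coeFn_kernelMean φ μ hκ,
    ae_all_iff.2 fun n => coeFn_kernelMean φ μ (hκs n)] with x hx hxκ hxκs
  refine tendsto_of_tendsto_meanEmbedding hφ ?_
  simpa only [hxκ, hxκs] using hx

lemma ConvexNormalIntegrand.lintegral_le_of_mem_closure [T2Space Y] [CompleteSpace H]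
    (hC : ConvexNormalIntegrand C) {μ : Measure X} [IsFiniteMeasure μ] {φ : C(Y, H)}
    (hφ : Function.Injective (meanEmbedding φ)) {κ : X → ProbabilityMeasure Y}
    (hκ : Measurable κ) {t : ℝ≥0∞}
    (h : kernelMean φ μ hκ ∈ closure (kernelMeanSublevel φ μ C t)) :
    ∫⁻ x, C x (κ x) ∂μ ≤ t := by
  obtain ⟨f, hf, hlim⟩ := mem_closure_iff_seq_limit.1 h
  choose κs hκs ht hfκs using hf
  obtain rfl : (fun n => kernelMean φ μ (hκs n)) = f := funext hfκs
  obtain ⟨k, hk⟩ := exists_seq_tendsto_ae_of_tendsto_kernelMean hφ hκ hκs hlim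
  calc ∫⁻ x, C x (κ x) ∂μ ≤ liminf (fun n => ∫⁻ x, C x (κs (k n) x) ∂μ) atTop :=
        hC.lintegral_le_liminf (fun n => hκs (k n)) hk
    _ ≤ liminf (fun _ : ℕ => t) atTop := liminf_le_liminf (Eventually.of_forall fun n => ht (k n))
    _ = t := liminf_const t

variable [PolishSpace Y] [TopologicalSpace X] [BorelSpace X]
  [SecondCountableTopology X] [RegularSpace X]

lemma ConvexNormalIntegrand.lowerSemicontinuousOn_lintegral_condProb
    (hC : ConvexNormalIntegrand C) (μ : ProbabilityMeasure X) :
    LowerSemicontinuousOn (fun π => ∫⁻ x, C x (condProb π x) ∂(μ : Measure X))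
      (plansFrom μ) := by
  obtain ⟨φ, hφ⟩ := exists_injective_meanEmbedding Y
  exact lowerSemicontinuousOn_of_convex_sublevel
    (continuousOn_dual_kernelMean_condProb φ μ) (hC.convex_kernelMeanSublevel φ μ)
    (fun π _ t ht => ⟨condProb π, measurable_condProb π, ht, rfl⟩)
    (fun π _ t => hC.lintegral_le_of_mem_closure hφ (measurable_condProb π))

lemma ConvexNormalIntegrand.lowerSemicontinuousOn_planCost (hC : ConvexNormalIntegrand C) (m : ℝ)
    (μ : ProbabilityMeasure X) :
    LowerSemicontinuousOn (planCost μ fun x σ => (C x σ : EReal) + m) (plansFrom μ) := by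
  intro π hπ
  have hlsc := (continuous_coe_add m).comp_lowerSemicontinuousOn
    (hC.lowerSemicontinuousOn_lintegral_condProb μ) (strictMono_coe_add m).monotone
  refine LowerSemicontinuousWithinAt.congr_of_eventuallyEq (hlsc π hπ) hπ ?_
  filter_upwards [self_mem_nhdsWithin] with π' hπ'
  exact (hC.planCost_eq m (isDisintegration_condProb hπ')).symm

end Semicontinuity

section FiberwiseMinimum

variable {T Z γ : Type*} [TopologicalSpace T] [CompleteLinearOrder γ] {K : Set T} {f : T → γ}

lemma exists_eq_biInf_of_isCompact (hK : IsCompact K) (hne : K.Nonempty)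
    (hf : LowerSemicontinuousOn f K) : ∃ t ∈ K, f t = ⨅ t ∈ K, f t := by
  obtain ⟨t, ht, hmin⟩ := hf.exists_isMinOn hne hK
  exact ⟨t, ht, le_antisymm (le_iInf₂ fun _ hs => hmin hs) (iInf₂_le t ht)⟩

lemma lowerSemicontinuous_biInf_fiber [TopologicalSpace Z] [T2Space Z] (hK : IsCompact K)
    (hf : LowerSemicontinuousOn f K) {p : T → Z} (hp : Continuous p) :
    LowerSemicontinuous fun z => ⨅ t ∈ K ∩ p ⁻¹' {z}, f t := by
  intro z s hs
  have hclosed : IsClosed (p '' (K ∩ f ⁻¹' Iic s)) :=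
    ((hf.isCompact_inter_preimage_Iic hK s).image hp).isClosed
  have hz : z ∉ p '' (K ∩ f ⁻¹' Iic s) := by
    rintro ⟨t, ⟨htK, hts⟩, rfl⟩
    exact hs.not_ge ((iInf₂_le t ⟨htK, rfl⟩).trans hts)
  filter_upwards [hclosed.isOpen_compl.mem_nhds hz] with z' hz'
  rcases (K ∩ p ⁻¹' {z'}).eq_empty_or_nonempty with hempty | hne
  · simpa only [hempty, mem_empty_iff_false, iInf_false, iInf_top] using hs.trans_le le_top
  · obtain ⟨t, ⟨htK, htz⟩, ht⟩ := exists_eq_biInf_of_isCompact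
      (hK.inter_right (isClosed_singleton.preimage hp)) hne (hf.mono inter_subset_left)
    rw [← ht]
    exact not_le.1 fun hts => hz' ⟨t, ⟨htK, hts⟩, htz⟩

end FiberwiseMinimum

section WeakTransport

variable {X Y : Type*} [TopologicalSpace X] [MeasurableSpace X] [BorelSpace X]
  [TopologicalSpace Y] [MeasurableSpace Y]

lemma isClosed_plansFrom [HasOuterApproxClosed X] [OpensMeasurableSpace (X × Y)]
    (μ : ProbabilityMeasure X) :
    IsClosed (plansFrom μ : Set (ProbabilityMeasure (X × Y))) := by
  have hfst : Continuous fun π : ProbabilityMeasure (X × Y) => π.map measurable_fst.aemeasurable :=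
    ProbabilityMeasure.continuous_map continuous_fst
  convert isClosed_singleton (x := μ) |>.preimage hfst using 1
  ext π
  exact (ProbabilityMeasure.toMeasure_injective.eq_iff
    (a := π.map measurable_fst.aemeasurable) (b := μ))

variable [PolishSpace X] [CompactSpace Y] [PolishSpace Y] [BorelSpace Y]
  {μ : ProbabilityMeasure X} {c : X → ProbabilityMeasure Y → EReal}

lemma isCompact_plansFrom (μ : ProbabilityMeasure X) :
    IsCompact (plansFrom μ : Set (ProbabilityMeasure (X × Y))) := by
  rw [← (isClosed_plansFrom μ).closure_eq]
  refine isCompact_closure_of_isTightMeasureSet (.prodMk ?_ .of_compactSpace)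
  refine (isTightMeasureSet_singleton (μ := (μ : Measure X))).subset ?_
  rintro _ ⟨_, ⟨π, hπ, rfl⟩, rfl⟩
  exact hπ

lemma lowerSemicontinuous_weakTransport
    (hlsc : LowerSemicontinuousOn (planCost μ c) (plansFrom μ)) :
    LowerSemicontinuous (weakTransport c μ) := by
  unfold weakTransport
  simp only [setOf_isCoupling_eq]
  exact lowerSemicontinuous_biInf_fiber (isCompact_plansFrom μ) hlsc
    (ProbabilityMeasure.continuous_map continuous_snd)

lemma exists_isCoupling_planCost_eq_weakTransport
    (hlsc : LowerSemicontinuousOn (planCost μ c) (plansFrom μ)) (ν : ProbabilityMeasure Y) :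
    ∃ π, IsCoupling π μ ν ∧ planCost μ c π = weakTransport c μ ν := by
  have hK : IsCompact {π : ProbabilityMeasure (X × Y) | IsCoupling π μ ν} := by
    rw [setOf_isCoupling_eq]
    exact (isCompact_plansFrom μ).inter_right
      (isClosed_singleton.preimage (ProbabilityMeasure.continuous_map continuous_snd))
  exact exists_eq_biInf_of_isCompact hK ⟨μ.prod ν, isCoupling_prod μ ν⟩
    (hlsc.mono fun π hπ => hπ.1)

lemma weakTransport_convexComb_le {a b : ℝ≥0} (hab : a + b = 1)
    (hlsc : LowerSemicontinuousOn (planCost μ c) (plansFrom μ))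
    (hconv : ∀ π₁ ∈ plansFrom μ, ∀ π₂ ∈ plansFrom μ, planCost μ c (convexComb a b hab π₁ π₂) ≤
      ((a : ℝ) : EReal) * planCost μ c π₁ + ((b : ℝ) : EReal) * planCost μ c π₂)
    (ν₁ ν₂ : ProbabilityMeasure Y) :
    weakTransport c μ (convexComb a b hab ν₁ ν₂) ≤
      ((a : ℝ) : EReal) * weakTransport c μ ν₁ + ((b : ℝ) : EReal) * weakTransport c μ ν₂ := by
  obtain ⟨π₁, h₁, hopt₁⟩ := exists_isCoupling_planCost_eq_weakTransport hlsc ν₁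
  obtain ⟨π₂, h₂, hopt₂⟩ := exists_isCoupling_planCost_eq_weakTransport hlsc ν₂
  rw [← hopt₁, ← hopt₂]
  exact (biInf_le (planCost μ c) (isCoupling_convexComb hab h₁ h₂)).trans (hconv π₁ h₁.1 π₂ h₂.1)

end WeakTransport

theorem planCost_convex_lsc_general {X Y : Type*} [TopologicalSpace X] [PolishSpace X]
    [MeasurableSpace X] [BorelSpace X] [TopologicalSpace Y] [CompactSpace Y] [PolishSpace Y]
    [MeasurableSpace Y] [BorelSpace Y] (c : X → ProbabilityMeasure Y → EReal)
    (hbdd : ∃ m : ℝ, ∀ x σ, (m : EReal) ≤ c x σ)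
    (hmeas : Measurable fun p : X × ProbabilityMeasure Y => c p.1 p.2)
    (hlsc : ∀ x, LowerSemicontinuous (c x))
    (hconv : ∀ (x : X) (σ₁ σ₂ τ : ProbabilityMeasure Y) (a b : ℝ≥0), a + b = 1 →
      (τ : Measure Y) = a • (σ₁ : Measure Y) + b • (σ₂ : Measure Y) →
      c x τ ≤ ((a : ℝ) : EReal) * c x σ₁ + ((b : ℝ) : EReal) * c x σ₂)
    (μ : ProbabilityMeasure X) :
    (∀ (π₁ π₂ π : ProbabilityMeasure (X × Y)) (a b : ℝ≥0), a + b = 1 →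
      π₁ ∈ plansFrom μ → π₂ ∈ plansFrom μ →
      (π : Measure (X × Y)) = a • (π₁ : Measure (X × Y)) + b • (π₂ : Measure (X × Y)) →
      planCost μ c π ≤
        ((a : ℝ) : EReal) * planCost μ c π₁ + ((b : ℝ) : EReal) * planCost μ c π₂) ∧
    LowerSemicontinuousOn (planCost μ c) (plansFrom μ) ∧
    (∀ (ν₁ ν₂ ν : ProbabilityMeasure Y) (a b : ℝ≥0), a + b = 1 →
      (ν : Measure Y) = a • (ν₁ : Measure Y) + b • (ν₂ : Measure Y) →
      weakTransport c μ ν ≤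
        ((a : ℝ) : EReal) * weakTransport c μ ν₁ + ((b : ℝ) : EReal) * weakTransport c μ ν₂) ∧
    LowerSemicontinuous (weakTransport c μ) := by
  obtain ⟨m, hm⟩ := hbdd
  obtain ⟨C, hC, rfl⟩ := exists_convexNormalIntegrand hm hmeas hlsc hconv
  have hplan := hC.lowerSemicontinuousOn_planCost m μ
  refine ⟨fun π₁ π₂ π a b hab h₁ h₂ hπ => ?_, hplan, fun ν₁ ν₂ ν a b hab hν => ?_,
    lowerSemicontinuous_weakTransport hplan⟩
  · obtain rfl : π = convexComb a b hab π₁ π₂ := Subtype.ext hπ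
    exact hC.planCost_convexComb_le m hab h₁ h₂
  · obtain rfl : ν = convexComb a b hab ν₁ ν₂ := Subtype.ext hν
    exact weakTransport_convexComb_le hab hplan
      (fun _ h₁ _ h₂ => hC.planCost_convexComb_le m hab h₁ h₂) ν₁ ν₂

/-- Convexity and lower semicontinuity of the plan cost on the set of couplings,
and of the optimal weak transport value in the target measure. -/
theorem planCost_convex_lsc
    {X Y : Type*} [MetricSpace X] [CompactSpace X] [MeasurableSpace X] [BorelSpace X]
    [MetricSpace Y] [CompactSpace Y] [MeasurableSpace Y] [BorelSpace Y]
    (c : X → ProbabilityMeasure Y → EReal)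
    (hbot : ∀ x σ, c x σ ≠ ⊥)
    (hbdd : ∃ m : ℝ, ∀ x σ, (m : EReal) ≤ c x σ)
    (hproper : ∀ x, ∃ σ, c x σ ≠ ⊤)
    (hlsc : LowerSemicontinuous (fun p : X × ProbabilityMeasure Y => c p.1 p.2))
    (hconv : ∀ (x : X) (σ₁ σ₂ τ : ProbabilityMeasure Y) (a b : ℝ≥0), a + b = 1 →
        (τ : Measure Y) = a • (σ₁ : Measure Y) + b • (σ₂ : Measure Y) →
        c x τ ≤ ((a : ℝ) : EReal) * c x σ₁ + ((b : ℝ) : EReal) * c x σ₂)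
    (μ : ProbabilityMeasure X) :
    (∀ (ν : ProbabilityMeasure Y) (π₁ π₂ π : ProbabilityMeasure (X × Y)) (a b : ℝ≥0),
        a + b = 1 → IsCoupling π₁ μ ν → IsCoupling π₂ μ ν →
        (π : Measure (X × Y)) = a • (π₁ : Measure (X × Y)) + b • (π₂ : Measure (X × Y)) →
        planCost μ c π ≤
          ((a : ℝ) : EReal) * planCost μ c π₁ + ((b : ℝ) : EReal) * planCost μ c π₂) ∧
    (∀ ν : ProbabilityMeasure Y,
        LowerSemicontinuousOn (planCost μ c)
          {π : ProbabilityMeasure (X × Y) | IsCoupling π μ ν}) ∧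
    (∀ (ν₁ ν₂ ν : ProbabilityMeasure Y) (a b : ℝ≥0), a + b = 1 →
        (ν : Measure Y) = a • (ν₁ : Measure Y) + b • (ν₂ : Measure Y) →
        weakTransport c μ ν ≤
          ((a : ℝ) : EReal) * weakTransport c μ ν₁ +
            ((b : ℝ) : EReal) * weakTransport c μ ν₂) ∧
    LowerSemicontinuous (fun ν : ProbabilityMeasure Y => weakTransport c μ ν) := by
  obtain ⟨hconv_plan, hlsc_plan, hweak⟩ := planCost_convex_lsc_general c hbdd hlsc.measurable
    (fun x => hlsc.comp (Continuous.prodMk_right x)) hconv μ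
  exact ⟨fun _ π₁ π₂ π a b hab h₁ h₂ => hconv_plan π₁ π₂ π a b hab h₁.1 h₂.1,
    fun _ => hlsc_plan.mono fun _ h => h.1, hweak⟩
end
end

section
/- Let X and Y be compact metric spaces and let c : X × P(Y) → (−∞,+∞] be bounded below and lower semicontinuous, with σ ↦ c(x,σ) proper and convex for each x ∈ X. For μ ∈ P(X), ν ∈ P(Y), let V_c(μ,ν) := inf{ ∫_X c(x,π_x) dμ(x) : π a coupling of μ and ν with disintegration (π_x) }. Let Λ(μ,ν) be the set of probability measures P on X × P(Y) whose first marginal is μ and whose second marginal Q ∈ P(P(Y)) has barycenter ν, i.e. ∫_{P(Y)} (∫_Y g dp) dQ(p) = ∫_Y g dν for all g ∈ C(Y). Then V_c(μ,ν) = inf{ ∫_{X×P(Y)} c(x,p) dP(x,p) : P ∈ Λ(μ,ν) }. -/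
open MeasureTheory Topology Filter Set
open scoped ENNReal NNReal

noncomputable section

/-- The Borel σ-algebra of the weak* topology on probability measures. -/
instance probMeasurableSpace {Z : Type*} [MeasurableSpace Z] [TopologicalSpace Z]
    [OpensMeasurableSpace Z] : MeasurableSpace (ProbabilityMeasure Z) := borel _

/-!
Jensen's inequality for a lower semicontinuous convex `F : P(Y) → [0, ∞]` and a law `Q` on `P(Y)`
comes from the strong law of large numbers: if `σ₀, σ₁, …` are independent with law `Q`, then almost
surely `(σ₀ + ⋯ + σₙ) / (n + 1)` converges weakly to the barycenter of `Q`, while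
`(F σ₀ + ⋯ + F σₙ) / (n + 1)` converges to `∫ F dQ`.

If `P = μ ⊗ L` is a competitor for the lifted problem, the barycenters of the conditional laws `L x`
are the disintegration of a coupling of `μ` and `ν`, which by Jensen's inequality costs no more than
`P`. Conversely the image of `μ` under `x ↦ (x, π_x)` is a competitor with the cost of `π`.
-/

section ProbabilityMeasureSpace

open TopologicalSpace

lemma exists_countable_isPiSystem_isTopologicalBasis (Y : Type*) [TopologicalSpace Y]
    [SecondCountableTopology Y] :
    ∃ S : Set (Set Y), S.Countable ∧ IsPiSystem S ∧ IsTopologicalBasis S := by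
  refine ⟨_, (countable_ofPred_finite_subset (countable_countableBasis Y)).image fun f => ⋂₀ f, ?_,
    isTopologicalBasis_of_subbasis (isBasis_countableBasis Y).eq_generateFrom⟩
  rintro _ ⟨f, ⟨hf, hfS⟩, rfl⟩ _ ⟨g, ⟨hg, hgS⟩, rfl⟩ -
  exact ⟨f ∪ g, ⟨hf.union hg, union_subset hfS hgS⟩, sInter_union f g⟩

instance borelSpace_probabilityMeasure {Z : Type*} [TopologicalSpace Z] [MeasurableSpace Z]
    [OpensMeasurableSpace Z] : BorelSpace (ProbabilityMeasure Z) := ⟨rfl⟩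

lemma lowerSemicontinuous_toMeasure_apply {Z : Type*} [TopologicalSpace Z] [HasOuterApproxClosed Z]
    [MeasurableSpace Z] [OpensMeasurableSpace Z] {U : Set Z} (hU : IsOpen U) :
    LowerSemicontinuous fun p : ProbabilityMeasure Z => (p : Measure Z) U :=
  lowerSemicontinuous_iff_le_liminf.2 fun _ =>
    ProbabilityMeasure.le_liminf_measure_open_of_tendsto tendsto_id hU

lemma measurable_toMeasure {Z : Type*} [TopologicalSpace Z] [HasOuterApproxClosed Z]
    [MeasurableSpace Z] [BorelSpace Z] :
    Measurable fun p : ProbabilityMeasure Z => (p : Measure Z) :=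
  .measure_of_isPiSystem_of_isProbabilityMeasure BorelSpace.measurable_eq
    isPiSystem_isOpen fun _ hU =>
      (lowerSemicontinuous_toMeasure_apply hU).measurable

lemma measurable_toMeasure_apply {Z : Type*} [TopologicalSpace Z] [HasOuterApproxClosed Z]
    [MeasurableSpace Z] [BorelSpace Z] {s : Set Z} (hs : MeasurableSet s) :
    Measurable fun p : ProbabilityMeasure Z => (p : Measure Z) s :=
  (Measure.measurable_coe hs).comp measurable_toMeasure

variable {Y Z : Type*} [TopologicalSpace Y] [MeasurableSpace Y] [BorelSpace Y]
  [TopologicalSpace Z] [MeasurableSpace Z] [BorelSpace Z]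

lemma isInducing_probabilityMeasure_map [PseudoMetrizableSpace Z] [SeparableSpace Z] {f : Y → Z}
    (hf : IsInducing f) :
    IsInducing fun p : ProbabilityMeasure Y => p.map hf.continuous.aemeasurable := by
  refine isInducing_iff_nhds.2 fun p => le_antisymm
    (ProbabilityMeasure.continuous_map hf.continuous).continuousAt.tendsto.le_comap ?_
  refine tendsto_id'.1 (tendsto_of_forall_isOpen_le_liminf' fun G hG => ?_)
  obtain ⟨U, hU, rfl⟩ := hf.isOpen_iff.1 hG
  have hmap (q : ProbabilityMeasure Y) :
      (q : Measure Y) (f ⁻¹' U) = (q.map hf.continuous.aemeasurable : Measure Z) U :=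
    (Measure.map_apply hf.continuous.measurable hU.measurableSet).symm
  simp only [hmap, id_eq]
  exact ProbabilityMeasure.le_liminf_measure_open_of_tendsto tendsto_comap hU

lemma measurableEmbedding_probabilityMeasure_map [PolishSpace Y] [MetrizableSpace Z]
    [SeparableSpace Z] {f : Y → Z} (hf : IsEmbedding f) :
    MeasurableEmbedding fun p : ProbabilityMeasure Y => p.map hf.continuous.aemeasurable := by
  have hfm : MeasurableEmbedding f := hf.continuous.measurableEmbedding hf.injective
  refine (isInducing_probabilityMeasure_map hf.isInducing).isEmbedding.measurableEmbedding ?_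
  have hrange : range (fun p : ProbabilityMeasure Y => p.map hf.continuous.aemeasurable) =
      {q : ProbabilityMeasure Z | (q : Measure Z) (range f) = 1} := by
    ext q
    refine ⟨?_, fun hq => ⟨⟨(q : Measure Z).comap f, ⟨?_⟩⟩, ?_⟩⟩
    · rintro ⟨p, rfl⟩
      simp [hfm.map_apply]
    · rw [hfm.comap_apply, image_univ]; exact hq
    · refine Subtype.ext ?_
      change ((q : Measure Z).comap f).map f = q
      rw [hfm.map_comap, Measure.restrict_eq_self_of_ae_mem]
      exact (mem_ae_iff_prob_eq_one hfm.measurableSet_range).2 hq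
  rw [hrange]
  exact measurable_toMeasure_apply hfm.measurableSet_range (measurableSet_singleton 1)

lemma standardBorelSpace_of_measurableEmbedding {α β : Type*} [MeasurableSpace α]
    [MeasurableSpace β] [StandardBorelSpace β] {f : α → β} (hf : MeasurableEmbedding f) :
    StandardBorelSpace α := by
  obtain ⟨τ, _, _⟩ := hf.measurableSet_range.standardBorel.polish
  let e := hf.equivRange
  let : TopologicalSpace α := .induced e τ
  refine ⟨⟨inferInstance, ⟨?_⟩, e.toEquiv.polishSpace_induced⟩⟩
  rw [borel_comap, ← BorelSpace.measurable_eq, e.measurableEmbedding.comap_eq]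

lemma polishSpace_probabilityMeasure [CompactSpace Y] [MetrizableSpace Y] :
    PolishSpace (ProbabilityMeasure Y) := by
  let := metrizableSpaceMetric (ProbabilityMeasure Y)
  infer_instance

instance standardBorelSpace_probabilityMeasure [PolishSpace Y] :
    StandardBorelSpace (ProbabilityMeasure Y) := by
  let := upgradeIsCompletelyMetrizable Y
  obtain ⟨f, hf⟩ := Metric.PiNatEmbed.exists_embedding_to_hilbert_cube (X := Y)
  have := polishSpace_probabilityMeasure (Y := ℕ → unitInterval)
  exact standardBorelSpace_of_measurableEmbedding (measurableEmbedding_probabilityMeasure_map hf)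

lemma measurable_probabilityMeasure_iff [PolishSpace Y] {X : Type*} [MeasurableSpace X]
    {κ : X → ProbabilityMeasure Y} :
    Measurable κ ↔ Measurable fun x => (κ x : Measure Y) := by
  refine ⟨measurable_toMeasure.comp, fun h => ?_⟩
  obtain ⟨S, hScount, hSpi, hSbasis⟩ := exists_countable_isPiSystem_isTopologicalBasis Y
  have hSmeas (s : S) : MeasurableSet (s : Set Y) := (hSbasis.isOpen s.2).measurableSet
  have : Countable S := hScount
  have hemb : MeasurableEmbedding fun (p : ProbabilityMeasure Y) (s : S) => (p : Measure Y) s := by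
    refine Measurable.measurableEmbedding
      (measurable_pi_iff.2 fun s => measurable_toMeasure_apply (hSmeas s)) fun p q hpq => ?_
    refine ProbabilityMeasure.toMeasure_injective (ext_of_generate_finite S
      (BorelSpace.measurable_eq.trans hSbasis.borel_eq_generateFrom) hSpi
      (fun s hs => congrFun hpq ⟨s, hs⟩) (by simp))
  rw [← hemb.measurable_comp_iff, measurable_pi_iff]
  exact fun s => (Measure.measurable_coe (hSmeas s)).comp h

end ProbabilityMeasureSpace

section Jensen

open ProbabilityTheory

variable {Y : Type*} [MeasurableSpace Y]

lemma tendsto_average_infinitePi {Ω : Type*} [MeasurableSpace Ω] (Q : Measure Ω)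
    [IsProbabilityMeasure Q] {F : Ω → ℝ≥0∞} (hF : Measurable F) (hfin : ∫⁻ x, F x ∂Q ≠ ⊤) :
    ∀ᵐ ω ∂(Measure.infinitePi fun _ : ℕ => Q),
      Tendsto (fun n : ℕ => (n + 1 : ℝ≥0)⁻¹ • ∑ i ∈ Finset.range (n + 1), F (ω i)) atTop
        (𝓝 (∫⁻ x, F x ∂Q)) := by
  have hmp (i : ℕ) := measurePreserving_eval_infinitePi (fun _ : ℕ => Q) i
  have hFlt : ∀ᵐ x ∂Q, F x < ⊤ := ae_lt_top hF hfin
  have hFltω : ∀ᵐ ω ∂(Measure.infinitePi fun _ : ℕ => Q), ∀ i, F (ω i) < ⊤ :=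
    ae_all_iff.2 fun i => (hmp i).quasiMeasurePreserving.ae hFlt
  have hindep : iIndepFun (fun (i : ℕ) (ω : ℕ → Ω) => (F (ω i)).toReal)
      (Measure.infinitePi fun _ => Q) :=
    iIndepFun_infinitePi (X := fun _ x => (F x).toReal) fun _ => hF.ennreal_toReal
  have hident (i : ℕ) : IdentDistrib (fun ω : ℕ → Ω => ω i) (fun ω => ω 0)
      (Measure.infinitePi fun _ => Q) (Measure.infinitePi fun _ => Q) :=
    ⟨(hmp i).measurable.aemeasurable, (hmp 0).measurable.aemeasurable,
      (hmp i).map_eq.trans (hmp 0).map_eq.symm⟩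
  have hmean : ∫ ω, (F (ω 0)).toReal ∂(Measure.infinitePi fun _ : ℕ => Q) =
      (∫⁻ x, F x ∂Q).toReal := by
    rw [integral_toReal (f := fun ω : ℕ → Ω => F (ω 0)) (hF.comp (hmp 0).measurable).aemeasurable
      (hFltω.mono fun ω h => h 0)]
    exact congrArg ENNReal.toReal ((hmp 0).lintegral_comp hF)
  have hlaw := strong_law_ae (fun i (ω : ℕ → Ω) => (F (ω i)).toReal)
    ((hmp 0).integrable_comp_of_integrable
      (integrable_toReal_of_lintegral_ne_top hF.aemeasurable hfin))
    (fun i j hij => hindep.indepFun hij) fun i => (hident i).comp hF.ennreal_toReal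
  filter_upwards [hlaw, hFltω] with ω hω hlt
  rw [hmean] at hω
  have hsum (n : ℕ) : ∑ i ∈ Finset.range (n + 1), F (ω i) ≠ ⊤ :=
    ENNReal.sum_ne_top.2 fun i _ => (hlt i).ne
  refine (ENNReal.tendsto_toReal_iff (fun n => ENNReal.nnreal_smul_ne_top (hsum n)) hfin).1
    ((hω.comp (tendsto_add_atTop_nat 1)).congr fun n => ?_)
  rw [ENNReal.toReal_smul, ENNReal.toReal_sum fun i _ => (hlt i).ne]
  simp [NNReal.smul_def]

/-- The uniform mixture `(σ 0 + ⋯ + σ n) / (n + 1)` of the first `n + 1` terms of a sequence. -/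
def uniformMixture (σ : ℕ → ProbabilityMeasure Y) (n : ℕ) : ProbabilityMeasure Y :=
  ⟨(n + 1 : ℝ≥0)⁻¹ • ∑ i ∈ Finset.range (n + 1), (σ i : Measure Y), ⟨by
    simp [ENNReal.smul_def, ENNReal.coe_inv, ENNReal.inv_mul_cancel]⟩⟩

/-- Convexity of a functional on probability measures, stated through binary mixtures because
`ProbabilityMeasure Y` is not a vector space. -/
def IsMixtureConvex (F : ProbabilityMeasure Y → ℝ≥0∞) : Prop :=
  ∀ (σ₁ σ₂ τ : ProbabilityMeasure Y) (a b : ℝ≥0), a + b = 1 →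
    (τ : Measure Y) = a • (σ₁ : Measure Y) + b • (σ₂ : Measure Y) → F τ ≤ a • F σ₁ + b • F σ₂

lemma average_range_succ {M : Type*} [AddCommMonoid M] [Module ℝ≥0 M] (f : ℕ → M) (n : ℕ) :
    (n + 2 : ℝ≥0)⁻¹ • ∑ i ∈ Finset.range (n + 2), f i =
      ((n + 1) / (n + 2) : ℝ≥0) • (n + 1 : ℝ≥0)⁻¹ • ∑ i ∈ Finset.range (n + 1), f i +
        (n + 2 : ℝ≥0)⁻¹ • f (n + 1) := by
  have hmul : ((n + 1) / (n + 2) : ℝ≥0) * (n + 1 : ℝ≥0)⁻¹ = (n + 2 : ℝ≥0)⁻¹ := by field_simp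
  rw [Finset.sum_range_succ, smul_add, smul_smul, hmul]

lemma IsMixtureConvex.apply_uniformMixture_le {F : ProbabilityMeasure Y → ℝ≥0∞}
    (hF : IsMixtureConvex F) (σ : ℕ → ProbabilityMeasure Y) (n : ℕ) :
    F (uniformMixture σ n) ≤ (n + 1 : ℝ≥0)⁻¹ • ∑ i ∈ Finset.range (n + 1), F (σ i) := by
  induction n with
  | zero =>
    have : uniformMixture σ 0 = σ 0 := Subtype.ext (by simp [uniformMixture])
    simp [this]
  | succ n ih =>
    have hmix : (uniformMixture σ (n + 1) : Measure Y) =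
        ((n + 1) / (n + 2) : ℝ≥0) • (uniformMixture σ n : Measure Y) +
          (n + 2 : ℝ≥0)⁻¹ • (σ (n + 1) : Measure Y) := by
      simpa [uniformMixture, ← one_add_one_eq_two, ← add_assoc] using
        average_range_succ (fun i => (σ i : Measure Y)) n
    calc F (uniformMixture σ (n + 1))
        ≤ ((n + 1) / (n + 2) : ℝ≥0) • F (uniformMixture σ n) + (n + 2 : ℝ≥0)⁻¹ • F (σ (n + 1)) :=
          hF _ _ _ _ _ (by field_simp; ring) hmix
      _ ≤ ((n + 1) / (n + 2) : ℝ≥0) • (n + 1 : ℝ≥0)⁻¹ • ∑ i ∈ Finset.range (n + 1), F (σ i) +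
          (n + 2 : ℝ≥0)⁻¹ • F (σ (n + 1)) := by gcongr
      _ = (n + 2 : ℝ≥0)⁻¹ • ∑ i ∈ Finset.range (n + 2), F (σ i) :=
          (average_range_succ (fun i => F (σ i)) n).symm
      _ = _ := by push_cast; ring_nf

variable [TopologicalSpace Y] [HasOuterApproxClosed Y] [BorelSpace Y]

/-- The barycenter `∫ p dQ(p)` of a law `Q` on the space of probability measures. -/
def barycenter (Q : Measure (ProbabilityMeasure Y)) [IsProbabilityMeasure Q] :
    ProbabilityMeasure Y :=
  ⟨Q.bind fun p => (p : Measure Y), isProbabilityMeasure_bind measurable_toMeasure.aemeasurable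
    (.of_forall fun _ => inferInstance)⟩

lemma toMeasure_barycenter_apply (Q : Measure (ProbabilityMeasure Y)) [IsProbabilityMeasure Q]
    {s : Set Y} (hs : MeasurableSet s) :
    (barycenter Q : Measure Y) s = ∫⁻ p, (p : Measure Y) s ∂Q :=
  Measure.bind_apply hs measurable_toMeasure.aemeasurable

lemma tendsto_uniformMixture_barycenter [SecondCountableTopology Y]
    (Q : Measure (ProbabilityMeasure Y)) [IsProbabilityMeasure Q] :
    ∀ᵐ σ ∂(Measure.infinitePi fun _ : ℕ => Q),
      Tendsto (uniformMixture σ) atTop (𝓝 (barycenter Q)) := by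
  obtain ⟨S, hScount, hSpi, hSbasis⟩ := exists_countable_isPiSystem_isTopologicalBasis Y
  have hSmeas (s) (hs : s ∈ S) : MeasurableSet s := (hSbasis.isOpen hs).measurableSet
  have hlaw : ∀ᵐ σ ∂(Measure.infinitePi fun _ : ℕ => Q), ∀ s ∈ S,
      Tendsto (fun n => (uniformMixture σ n : Measure Y) s) atTop
        (𝓝 ((barycenter Q : Measure Y) s)) := by
    refine (ae_ball_iff hScount).2 fun s hs => ?_
    have hfin : ∫⁻ p : ProbabilityMeasure Y, (p : Measure Y) s ∂Q ≠ ⊤ := by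
      rw [← toMeasure_barycenter_apply Q (hSmeas s hs)]
      exact measure_ne_top _ s
    filter_upwards [tendsto_average_infinitePi Q (measurable_toMeasure_apply (hSmeas s hs)) hfin]
      with σ hσ
    simpa [toMeasure_barycenter_apply Q (hSmeas s hs), uniformMixture] using hσ
  filter_upwards [hlaw] with σ hσ
  refine hSpi.tendsto_probabilityMeasure_of_tendsto_of_mem hSmeas (fun u hu x hx => ?_)
    fun s hs => (ENNReal.tendsto_toNNReal (measure_ne_top _ s)).comp (hσ s hs)
  obtain ⟨s, hs, hxs, hsu⟩ := hSbasis.exists_subset_of_mem_open hx hu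
  exact ⟨s, hs, (hSbasis.isOpen hs).mem_nhds hxs, hsu⟩

/-- **Jensen's inequality**: the law of large numbers approximates the barycenter by uniform
mixtures of a `Q`-typical sequence, along which convexity bounds `F` by its empirical average. -/
theorem IsMixtureConvex.apply_barycenter_le_lintegral [SecondCountableTopology Y]
    {F : ProbabilityMeasure Y → ℝ≥0∞} (hF : IsMixtureConvex F) (hlsc : LowerSemicontinuous F)
    (Q : Measure (ProbabilityMeasure Y)) [IsProbabilityMeasure Q] :
    F (barycenter Q) ≤ ∫⁻ p, F p ∂Q := by
  by_cases hfin : ∫⁻ p, F p ∂Q = ⊤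
  · exact hfin ▸ le_top
  obtain ⟨σ, hσ, hFσ⟩ := ((tendsto_uniformMixture_barycenter Q).and
    (tendsto_average_infinitePi Q hlsc.measurable hfin)).exists
  calc F (barycenter Q) ≤ liminf (fun n => F (uniformMixture σ n)) atTop :=
        (lowerSemicontinuous_iff_le_liminf.1 hlsc _).trans (liminf_le_liminf_of_le hσ)
    _ ≤ liminf (fun n : ℕ => (n + 1 : ℝ≥0)⁻¹ • ∑ i ∈ Finset.range (n + 1), F (σ i)) atTop :=
        liminf_le_liminf (.of_forall (hF.apply_uniformMixture_le σ))
    _ = ∫⁻ p, F p ∂Q := hFσ.liminf_eq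

end Jensen

section SignedIntegral

variable {α β : Type*} [MeasurableSpace α] [MeasurableSpace β]

lemma eint_map {μ : Measure α} {g : α → β} {f : β → EReal} (hg : Measurable g)
    (hf : Measurable f) : eint (μ.map g) f = eint μ fun x => f (g x) := by
  have hpos : ∫⁻ y, epos (f y) ∂(μ.map g) = ∫⁻ x, epos (f (g x)) ∂μ :=
    lintegral_map hf.ereal_toENNReal hg
  have hneg : ∫⁻ y, epos (-(f y)) ∂(μ.map g) = ∫⁻ x, epos (-(f (g x))) ∂μ :=
    lintegral_map (measurable_neg.comp hf).ereal_toENNReal hg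
  rw [eint, eint, hpos, hneg]

lemma add_coe_nonneg_of_neg_coe_le {a : EReal} {K : ℝ} (ha : -(K : EReal) ≤ a) :
    0 ≤ a + (K : EReal) := by
  simpa only [sub_eq_add_neg, neg_neg] using
    (EReal.sub_nonneg (x := a) (y := -(K : EReal)) (.inr (by simp)) (.inr (by simp))).2 ha

lemma toENNReal_add_coe_add_toENNReal_neg {a : EReal} {K : ℝ≥0} (ha : -((K : ℝ) : EReal) ≤ a) :
    (a + (K : ℝ)).toENNReal + (-a).toENNReal = a.toENNReal + K := by
  rcases le_total 0 a with h0 | h0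
  · rw [EReal.toENNReal_add h0 (by exact_mod_cast K.2),
      EReal.toENNReal_of_nonpos (x := -a) (by simpa using h0), add_zero]
    simp
  · lift a to ℝ using ⟨ne_top_of_le_ne_top EReal.zero_ne_top h0, ne_bot_of_le_ne_bot (by simp) ha⟩
    rw [← EReal.toENNReal_add (add_coe_nonneg_of_neg_coe_le ha) (EReal.neg_nonneg.2 h0),
      EReal.toENNReal_of_nonpos h0, zero_add, ← sub_eq_add_neg, EReal.add_sub_cancel_left]
    simp

lemma coe_sub_coe_eq_of_add_eq_add {a b c d : ℝ≥0∞} (hb : b ≠ ⊤) (hd : d ≠ ⊤)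
    (h : a + b = c + d) : (c : EReal) - (b : EReal) = (a : EReal) - (d : EReal) := by
  lift b to ℝ≥0 using hb
  lift d to ℝ≥0 using hd
  have h' : (a : EReal) + (b : ℝ) = c + (d : ℝ) := by
    simpa only [EReal.coe_ennreal_add, EReal.coe_nnreal_eq_coe_real] using
      congrArg ((↑) : ℝ≥0∞ → EReal) h
  calc (c : EReal) - (b : ℝ)
    _ = c + (d : ℝ) - (d : ℝ) - (b : ℝ) := by rw [EReal.add_sub_cancel_right]
    _ = a + (b : ℝ) - (b : ℝ) - (d : ℝ) := by
        rw [← h']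
        exact add_right_comm _ _ _
    _ = a - (d : ℝ) := by rw [EReal.add_sub_cancel_right]

lemma eint_eq_lintegral_sub (μ : Measure α) [IsProbabilityMeasure μ] {f : α → EReal}
    (hf : Measurable f) {K : ℝ≥0} (hK : ∀ x, -((K : ℝ) : EReal) ≤ f x) :
    eint μ f = ((∫⁻ x, (f x + (K : ℝ)).toENNReal ∂μ : ℝ≥0∞) : EReal) - (K : ℝ) := by
  have hneg : Measurable fun x => (-(f x)).toENNReal := (measurable_neg.comp hf).ereal_toENNReal
  have hadd : ∫⁻ x, (f x + (K : ℝ)).toENNReal ∂μ + ∫⁻ x, (-(f x)).toENNReal ∂μ =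
      ∫⁻ x, (f x).toENNReal ∂μ + K := by
    rw [← lintegral_add_right _ hneg]
    simp_rw [toENNReal_add_coe_add_toENNReal_neg (hK _)]
    simp [lintegral_add_right]
  have hfin : ∫⁻ x, (-(f x)).toENNReal ∂μ ≠ ⊤ := by
    refine ne_top_of_le_ne_top (ENNReal.coe_ne_top (r := K)) ?_
    calc ∫⁻ x, (-(f x)).toENNReal ∂μ ≤ ∫⁻ _, K ∂μ := lintegral_mono fun x =>
          (EReal.toENNReal_le_toENNReal (EReal.neg_le.1 (hK x))).trans_eq (by simp)
      _ = K := by simp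
  exact coe_sub_coe_eq_of_add_eq_add hfin ENNReal.coe_ne_top hadd

lemma continuous_toENNReal_add_coe (K : ℝ) : Continuous fun a : EReal => (a + K).toENNReal :=
  EReal.continuous_toENNReal.comp (continuous_iff_continuousAt.2 fun _ =>
    (EReal.continuousAt_add (Or.inr (EReal.coe_ne_bot K)) (Or.inr (EReal.coe_ne_top K))).comp
      (continuousAt_id.prodMk continuousAt_const))

lemma monotone_toENNReal_add_coe (K : ℝ) : Monotone fun a : EReal => (a + K).toENNReal :=
  fun _ _ hab => EReal.toENNReal_le_toENNReal (add_le_add_left hab _)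

lemma toENNReal_add_coe_le_of_le_mixture {u v w : EReal} {K : ℝ} (hu : -(K : EReal) ≤ u)
    (hv : -(K : EReal) ≤ v) {a b : ℝ≥0} (hab : a + b = 1)
    (hw : w ≤ ((a : ℝ) : EReal) * u + ((b : ℝ) : EReal) * v) :
    (w + K).toENNReal ≤ a • (u + K).toENNReal + b • (v + K).toENNReal := by
  have ha : 0 ≤ ((a : ℝ) : EReal) := by exact_mod_cast a.2
  have hb : 0 ≤ ((b : ℝ) : EReal) := by exact_mod_cast b.2
  have hK : (K : EReal) = ((a : ℝ) : EReal) * K + ((b : ℝ) : EReal) * K := by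
    have hab' : (a : ℝ) + b = 1 := by exact_mod_cast hab
    rw [← EReal.coe_mul, ← EReal.coe_mul, ← EReal.coe_add, ← add_mul, hab', one_mul]
  have hshift : ((a : ℝ) : EReal) * u + ((b : ℝ) : EReal) * v + K =
      ((a : ℝ) : EReal) * (u + K) + ((b : ℝ) : EReal) * (v + K) := by
    rw [EReal.left_distrib_of_nonneg_of_ne_top ha (EReal.coe_ne_top _),
      EReal.left_distrib_of_nonneg_of_ne_top hb (EReal.coe_ne_top _), add_add_add_comm, ← hK]
  calc (w + K).toENNReal
      ≤ (((a : ℝ) : EReal) * (u + K) + ((b : ℝ) : EReal) * (v + K)).toENNReal :=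
        hshift ▸ monotone_toENNReal_add_coe K hw
    _ = a • (u + K).toENNReal + b • (v + K).toENNReal := by
        rw [EReal.toENNReal_add (mul_nonneg ha (add_coe_nonneg_of_neg_coe_le hu))
          (mul_nonneg hb (add_coe_nonneg_of_neg_coe_le hv)), EReal.toENNReal_mul ha,
          EReal.toENNReal_mul hb]
        simp [ENNReal.smul_def]

end SignedIntegral

section Disintegration

open ProbabilityTheory

variable {X Y : Type*} [MeasurableSpace X] [MeasurableSpace Y] {π : ProbabilityMeasure (X × Y)}
  {μ : ProbabilityMeasure X} {ν : ProbabilityMeasure Y} {κ : X → ProbabilityMeasure Y}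

lemma IsDisintegration.fst_eq (hκ : IsDisintegration π μ κ) : (π : Measure (X × Y)).fst = μ := by
  ext A hA
  rw [Measure.fst_apply hA, ← prod_univ, hκ.2 A univ hA .univ]
  simp

lemma IsDisintegration.snd_eq (hκ : IsDisintegration π μ κ) :
    (π : Measure (X × Y)).snd = (μ : Measure X).bind fun x => (κ x : Measure Y) := by
  ext B hB
  rw [Measure.snd_apply hB, Measure.bind_apply hB hκ.1.aemeasurable, ← univ_prod,
    hκ.2 univ B .univ hB, Measure.restrict_univ]

lemma IsDisintegration.isCoupling_iff (hκ : IsDisintegration π μ κ) :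
    IsCoupling π μ ν ↔ ((μ : Measure X).bind fun x => (κ x : Measure Y)) = ν := by
  rw [← hκ.snd_eq]
  exact and_iff_right hκ.fst_eq

lemma exists_isDisintegration (μ : ProbabilityMeasure X)
    (hκ : Measurable fun x => (κ x : Measure Y)) :
    ∃ π : ProbabilityMeasure (X × Y), IsDisintegration π μ κ := by
  let K : Kernel X Y := ⟨fun x => (κ x : Measure Y), hκ⟩
  have : IsMarkovKernel K := ⟨fun x => (κ x).2⟩
  exact ⟨⟨(μ : Measure X) ⊗ₘ K, inferInstance⟩, hκ,
    fun A B hA hB => Measure.compProd_apply_prod hA hB⟩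

end Disintegration

section LiftedPlan

open ProbabilityTheory

variable {X Y : Type*} [MeasurableSpace X] [TopologicalSpace Y] [MeasurableSpace Y] [BorelSpace Y]

lemma integral_barycenter [HasOuterApproxClosed Y] (Q : Measure (ProbabilityMeasure Y))
    [IsProbabilityMeasure Q] {f : Y → ℝ} (hf : Integrable f (barycenter Q : Measure Y)) :
    ∫ y, f y ∂(barycenter Q : Measure Y) = ∫ p, ∫ y, f y ∂(p : Measure Y) ∂Q := by
  let K : Kernel (ProbabilityMeasure Y) Y := ⟨fun p => (p : Measure Y), measurable_toMeasure⟩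
  have : IsMarkovKernel K := ⟨fun p => p.2⟩
  have hbary : (barycenter Q : Measure Y) = (K ∘ₖ Kernel.const Unit Q) () :=
    Measure.comp_eq_comp_const_apply (κ := K)
  rw [hbary] at hf ⊢
  exact (Kernel.integral_comp hf).trans (by rw [Kernel.const_apply]; rfl)

lemma barycenter_eq_iff_forall_integral_eq [CompactSpace Y] [HasOuterApproxClosed Y]
    (Q : Measure (ProbabilityMeasure Y)) [IsProbabilityMeasure Q] (ν : ProbabilityMeasure Y) :
    barycenter Q = ν ↔
      ∀ g : C(Y, ℝ), ∫ p, ∫ y, g y ∂(p : Measure Y) ∂Q = ∫ y, g y ∂(ν : Measure Y) := by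
  have hgint (g : C(Y, ℝ)) : Integrable g (barycenter Q : Measure Y) :=
    (BoundedContinuousFunction.mkOfCompact g).integrable (barycenter Q : Measure Y)
  simp_rw [← integral_barycenter Q (hgint _)]
  exact ⟨fun h g => h ▸ rfl, fun h => ProbabilityMeasure.toMeasure_injective
    (ext_of_forall_integral_eq_of_IsFiniteMeasure fun f => h f.toContinuousMap)⟩

/-- `P` belongs to `Λ(μ, ν)`: its first marginal is `μ` and its second marginal has barycenter
`ν`. -/
def IsLiftedPlan [HasOuterApproxClosed Y] (P : ProbabilityMeasure (X × ProbabilityMeasure Y))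
    (μ : ProbabilityMeasure X) (ν : ProbabilityMeasure Y) : Prop :=
  (P : Measure (X × ProbabilityMeasure Y)).fst = μ ∧
    barycenter (P : Measure (X × ProbabilityMeasure Y)).snd = ν

lemma isLiftedPlan_map_graph [HasOuterApproxClosed Y] {μ : ProbabilityMeasure X}
    {ν : ProbabilityMeasure Y} {κ : X → ProbabilityMeasure Y} (hκ : Measurable κ)
    (hν : ((μ : Measure X).bind fun x => (κ x : Measure Y)) = ν) :
    IsLiftedPlan (μ.map (f := fun x => (x, κ x)) (by fun_prop)) μ ν := by
  refine ⟨(Measure.fst_map_prodMk hκ).trans Measure.map_id, Subtype.ext ?_⟩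
  calc ((Measure.map (fun x => (x, κ x)) μ).snd.bind fun p => (p : Measure Y))
      = (Measure.map κ μ).bind fun p => (p : Measure Y) := by
        rw [Measure.snd_map_prodMk (X := fun x => x) measurable_id']
    _ = (μ : Measure X).bind fun x => (κ x : Measure Y) := by
        rw [Measure.bind, Measure.map_map measurable_toMeasure hκ]; rfl
    _ = ν := hν

section Kernel

variable [HasOuterApproxClosed Y] (L : Kernel X (ProbabilityMeasure Y)) [IsMarkovKernel L]

lemma measurable_toMeasure_barycenter : Measurable fun x => (barycenter (L x) : Measure Y) :=
  (Measure.measurable_bind' measurable_toMeasure).comp L.measurable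

lemma bind_toMeasure_barycenter (μ : Measure X) :
    (μ.bind fun x => (barycenter (L x) : Measure Y)) =
      (μ.bind L).bind fun p => (p : Measure Y) :=
  (Measure.bind_bind L.measurable.aemeasurable measurable_toMeasure.aemeasurable).symm

lemma lintegral_barycenter_le_lintegral_compProd [SecondCountableTopology Y]
    {F : X → ProbabilityMeasure Y → ℝ≥0∞}
    (hFm : Measurable fun q : X × ProbabilityMeasure Y => F q.1 q.2)
    (hF : ∀ x, IsMixtureConvex (F x)) (hlsc : ∀ x, LowerSemicontinuous (F x)) (μ : Measure X)
    [SFinite μ] :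
    ∫⁻ x, F x (barycenter (L x)) ∂μ ≤ ∫⁻ q, F q.1 q.2 ∂(μ ⊗ₘ L) := by
  rw [Measure.lintegral_compProd hFm]
  exact lintegral_mono fun x => (hF x).apply_barycenter_le_lintegral (hlsc x) (L x)

end Kernel

variable [PolishSpace Y] {μ : ProbabilityMeasure X} {ν : ProbabilityMeasure Y}

lemma IsLiftedPlan.exists_kernel {P : ProbabilityMeasure (X × ProbabilityMeasure Y)}
    (hP : IsLiftedPlan P μ ν) :
    ∃ (L : Kernel X (ProbabilityMeasure Y)) (_ : IsMarkovKernel L),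
      (P : Measure (X × ProbabilityMeasure Y)) = μ ⊗ₘ L ∧
        ((μ : Measure X).bind fun x => (barycenter (L x) : Measure Y)) = ν := by
  have : Nonempty (ProbabilityMeasure Y) := P.nonempty.map Prod.snd
  let L := (P : Measure (X × ProbabilityMeasure Y)).condKernel
  have hPL : (P : Measure (X × ProbabilityMeasure Y)) = μ ⊗ₘ L := by
    rw [← hP.1, Measure.disintegrate]
  refine ⟨L, inferInstance, hPL, ?_⟩
  rw [bind_toMeasure_barycenter, ← Measure.snd_compProd, ← hPL]
  exact congrArg ProbabilityMeasure.toMeasure hP.2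

lemma IsLiftedPlan.exists_isDisintegration_eint_le
    {P : ProbabilityMeasure (X × ProbabilityMeasure Y)}
    (hP : IsLiftedPlan P μ ν) {c : X → ProbabilityMeasure Y → EReal} {K : ℝ≥0}
    (hK : ∀ x σ, -((K : ℝ) : EReal) ≤ c x σ)
    (hc : Measurable fun q : X × ProbabilityMeasure Y => c q.1 q.2)
    (hlsc : ∀ x, LowerSemicontinuous (c x))
    (hconv : ∀ x, IsMixtureConvex fun σ => (c x σ + (K : ℝ)).toENNReal) :
    ∃ (π : ProbabilityMeasure (X × Y)) (κ : X → ProbabilityMeasure Y), IsCoupling π μ ν ∧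
      IsDisintegration π μ κ ∧
        eint μ (fun x => c x (κ x)) ≤
          eint (P : Measure (X × ProbabilityMeasure Y)) fun q => c q.1 q.2 := by
  obtain ⟨L, _, hPL, hν⟩ := hP.exists_kernel
  obtain ⟨π, hπ⟩ := exists_isDisintegration μ (measurable_toMeasure_barycenter L)
  refine ⟨π, _, hπ.isCoupling_iff.2 hν, hπ, ?_⟩
  have hbary : Measurable fun x => barycenter (L x) :=
    measurable_probabilityMeasure_iff.2 (measurable_toMeasure_barycenter L)
  have hcbary : Measurable fun x => c x (barycenter (L x)) := hc.comp (measurable_id.prodMk hbary)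
  rw [eint_eq_lintegral_sub μ hcbary fun x => hK x _,
    eint_eq_lintegral_sub P hc fun q => hK q.1 q.2, hPL]
  refine EReal.sub_le_sub (EReal.coe_ennreal_le_coe_ennreal_iff.2 ?_) le_rfl
  exact lintegral_barycenter_le_lintegral_compProd L
    ((continuous_toENNReal_add_coe K).measurable.comp hc) hconv
    (fun x => (continuous_toENNReal_add_coe K).comp_lowerSemicontinuous (hlsc x)
      (monotone_toENNReal_add_coe K)) μ

lemma IsDisintegration.exists_isLiftedPlan_eint_eq {π : ProbabilityMeasure (X × Y)}
    {κ : X → ProbabilityMeasure Y} (hκ : IsDisintegration π μ κ) (hπ : IsCoupling π μ ν)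
    {c : X → ProbabilityMeasure Y → EReal}
    (hc : Measurable fun q : X × ProbabilityMeasure Y => c q.1 q.2) :
    ∃ P : ProbabilityMeasure (X × ProbabilityMeasure Y), IsLiftedPlan P μ ν ∧
      eint (P : Measure (X × ProbabilityMeasure Y)) (fun q => c q.1 q.2) =
        eint μ fun x => c x (κ x) := by
  have hκm : Measurable κ := measurable_probabilityMeasure_iff.2 hκ.1
  exact ⟨_, isLiftedPlan_map_graph hκm (hκ.isCoupling_iff.1 hπ),
    eint_map (measurable_id.prodMk hκm) hc⟩

theorem weakTransport_eq_lifted_general (c : X → ProbabilityMeasure Y → EReal)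
    (hbdd : ∃ m : ℝ, ∀ x σ, (m : EReal) ≤ c x σ)
    (hc : Measurable fun q : X × ProbabilityMeasure Y => c q.1 q.2)
    (hlsc : ∀ x, LowerSemicontinuous (c x))
    (hconv : ∀ (x : X) (σ₁ σ₂ τ : ProbabilityMeasure Y) (a b : ℝ≥0), a + b = 1 →
        (τ : Measure Y) = a • (σ₁ : Measure Y) + b • (σ₂ : Measure Y) →
        c x τ ≤ ((a : ℝ) : EReal) * c x σ₁ + ((b : ℝ) : EReal) * c x σ₂)
    (μ : ProbabilityMeasure X) (ν : ProbabilityMeasure Y) :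
    weakTransport c μ ν =
      ⨅ P ∈ {P : ProbabilityMeasure (X × ProbabilityMeasure Y) | IsLiftedPlan P μ ν},
        eint (P : Measure (X × ProbabilityMeasure Y)) fun q => c q.1 q.2 := by
  obtain ⟨m, hm⟩ := hbdd
  have hK (x : X) (σ : ProbabilityMeasure Y) : -(((-m).toNNReal : ℝ) : EReal) ≤ c x σ :=
    (EReal.neg_le.1 (by exact_mod_cast Real.le_coe_toNNReal (-m))).trans (hm x σ)
  have hconvK (x : X) : IsMixtureConvex fun σ => (c x σ + ((-m).toNNReal : ℝ)).toENNReal :=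
    fun σ₁ σ₂ τ a b hab hτ => toENNReal_add_coe_le_of_le_mixture (hK x σ₁) (hK x σ₂) hab
      (hconv x σ₁ σ₂ τ a b hab hτ)
  refine le_antisymm (le_iInf₂ fun P hP => ?_)
    (le_iInf₂ fun π hπ => le_iInf₂ fun κ hκ => ?_)
  · obtain ⟨π, κ, hπ, hκ, hle⟩ := hP.exists_isDisintegration_eint_le hK hc hlsc hconvK
    exact (iInf₂_le π hπ).trans ((iInf₂_le κ hκ).trans hle)
  · obtain ⟨P, hP, heq⟩ := hκ.exists_isLiftedPlan_eint_eq hπ hc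
    exact (iInf₂_le P hP).trans heq.le

end LiftedPlan

/-- **Lifting of the optimal weak transport.**  The optimal weak transport cost
`V_c(μ,ν)` coincides with a plain optimal transport problem on the enlarged state
space `X × P(Y)`, over measures with first marginal `μ` and second marginal with
barycenter `ν`. -/
theorem weakTransport_eq_lifted
    {X Y : Type*} [MetricSpace X] [CompactSpace X] [MeasurableSpace X] [BorelSpace X]
    [MetricSpace Y] [CompactSpace Y] [MeasurableSpace Y] [BorelSpace Y]
    (c : X → ProbabilityMeasure Y → EReal)
    (hbot : ∀ x σ, c x σ ≠ ⊥)
    (hbdd : ∃ m : ℝ, ∀ x σ, (m : EReal) ≤ c x σ)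
    (hproper : ∀ x, ∃ σ, c x σ ≠ ⊤)
    (hlsc : LowerSemicontinuous (fun p : X × ProbabilityMeasure Y => c p.1 p.2))
    (hconv : ∀ (x : X) (σ₁ σ₂ τ : ProbabilityMeasure Y) (a b : ℝ≥0), a + b = 1 →
        (τ : Measure Y) = a • (σ₁ : Measure Y) + b • (σ₂ : Measure Y) →
        c x τ ≤ ((a : ℝ) : EReal) * c x σ₁ + ((b : ℝ) : EReal) * c x σ₂)
    (μ : ProbabilityMeasure X) (ν : ProbabilityMeasure Y) :
    weakTransport c μ ν =
      ⨅ P ∈ {P : ProbabilityMeasure (X × ProbabilityMeasure Y) |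
          (P : Measure (X × ProbabilityMeasure Y)).map Prod.fst = (μ : Measure X) ∧
          ∀ g : C(Y, ℝ),
            (∫ p, (∫ y, g y ∂(p : Measure Y))
                ∂((P : Measure (X × ProbabilityMeasure Y)).map Prod.snd))
              = ∫ y, g y ∂(ν : Measure Y)},
        eint (P : Measure (X × ProbabilityMeasure Y)) (fun q => c q.1 q.2) := by
  simpa only [IsLiftedPlan, barycenter_eq_iff_forall_integral_eq, Measure.fst, Measure.snd] using
    weakTransport_eq_lifted_general c hbdd hlsc.measurable
      (fun x => hlsc.comp (Continuous.prodMk_right x)) hconv μ ν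
end
end

section
/- Let X and Y be compact metric spaces and let T : C(Y) → USC(X) be a standard map, i.e., for every x ∈ X there is ν ∈ P(Y) with sup_{g∈C(Y)} { ∫_Y g dν − Tg(x) } < +∞. Define the Kantorovich envelope ⎵T g(x) := sup_{σ∈P(Y)} inf_{h∈C(Y)} { ∫_Y (g − h) dσ + Th(x) }. Then: (a) ⎵T g ≤ T g pointwise for every g ∈ C(Y); (b) ⎵T is a backward Kantorovich operator (it maps C(Y) to USC(X), is monotone, affine on constants, convex, and lower semicontinuous in g); (c) ⎵T is the largest backward Kantorovich operator below T: if S : C(Y) → USC(X) is any backward Kantorovich operator with Sg ≤ Tg pointwise for all g ∈ C(Y), then Sg ≤ ⎵Tg pointwise for all g ∈ C(Y). Consequently T = ⎵T if and only if T is itself a backward Kantorovich operator. -/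
open MeasureTheory Topology Filter Set
open scoped ENNReal NNReal

noncomputable section

/-- Membership in `USC(X)`: upper semicontinuous, bounded above, not identically `⊥`. -/
def IsUSCb {X : Type*} [TopologicalSpace X] (f : X → EReal) : Prop :=
  UpperSemicontinuous f ∧ (∃ M : ℝ, ∀ x, f x ≤ (M : EReal)) ∧ (∃ x, f x ≠ ⊥)

/-- A backward Kantorovich operator `T : C(Y) → USC(X)`: monotone, affine on the
constants, convex, and lower semicontinuous with respect to uniform convergence. -/
def IsBackwardKantorovich {X Y : Type*} [TopologicalSpace X] [TopologicalSpace Y]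
    [CompactSpace Y] (T : C(Y, ℝ) → X → EReal) : Prop :=
  (∀ g, IsUSCb (T g)) ∧
  (∀ g₁ g₂ : C(Y, ℝ), (∀ y, g₁ y ≤ g₂ y) → ∀ x, T g₁ x ≤ T g₂ x) ∧
  (∀ (g : C(Y, ℝ)) (c : ℝ) (x : X),
      T (g + ContinuousMap.const Y c) x = T g x + (c : EReal)) ∧
  (∀ (g₁ g₂ : C(Y, ℝ)) (l : ℝ), 0 ≤ l → l ≤ 1 → ∀ x,
      T (l • g₁ + (1 - l) • g₂) x ≤ (l : EReal) * T g₁ x + ((1 - l : ℝ) : EReal) * T g₂ x) ∧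
  (∀ (g : C(Y, ℝ)) (gn : ℕ → C(Y, ℝ)), Tendsto gn atTop (𝓝 g) →
      ∀ x, T g x ≤ liminf (fun n => T (gn n) x) atTop)

/-- The Kantorovich envelope of a map `T : C(Y) → USC(X)`:
`⎵T g(x) = sup_{σ ∈ P(Y)} inf_{h ∈ C(Y)} { ∫ (g − h) dσ + Th(x) }`. -/
def kenv {X Y : Type*} [TopologicalSpace Y] [MeasurableSpace Y]
    (T : C(Y, ℝ) → X → EReal) (g : C(Y, ℝ)) (x : X) : EReal :=
  ⨆ σ : ProbabilityMeasure Y, ⨅ h : C(Y, ℝ),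
    (((∫ y, (g y - h y) ∂(σ : Measure Y)) : ℝ) : EReal) + T h x

/-!
For fixed `x`, `g ↦ ⎵T g(x)` is the supremum of the functionals `h ↦ ∫ h dσ + b`, with `σ ∈ P(Y)`
and `b ∈ ℝ`, lying below `h ↦ Th(x)`. Each such functional is monotone, affine and 1-Lipschitz, and
commutes with adding constants, so the supremum inherits monotonicity, convexity, lower
semicontinuity and translation equivariance; upper semicontinuity in `x` comes from the compactness
of `P(Y)`.

For maximality, let `S` be a backward Kantorovich operator. At each `x` it is either identically
`-∞` or real-valued, and then `g ↦ Sg(x)` is convex and 1-Lipschitz, hence by Hahn-Banach the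
supremum of its continuous affine minorants `l + b`. Monotonicity forces `l ≥ 0` and translation
equivariance forces `l 1 = 1`, so by Riesz-Markov-Kakutani `l` is integration against a probability
measure. Thus `S = ⎵S ≤ ⎵T` as soon as `S ≤ T`.
-/

lemma upperSemicontinuous_iSup_of_compactSpace {K X β : Type*} [TopologicalSpace K] [CompactSpace K]
    [TopologicalSpace X] [CompleteLinearOrder β] {F : K × X → β} (hF : UpperSemicontinuous F) :
    UpperSemicontinuous fun x => ⨆ k, F (k, x) := by
  intro x a ha
  have hlt : ∀ᶠ x' in 𝓝 x, ∀ k ∈ (univ : Set K), F (k, x') < a :=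
    isCompact_univ.eventually_forall_of_forall_eventually fun k _ =>
      (continuous_swap.tendsto (x, k)).eventually
        (hF (k, x) a ((le_iSup (fun k => F (k, x)) k).trans_lt ha))
  filter_upwards [hlt] with x' hx'
  rcases isEmpty_or_nonempty K with hK | hK
  · simpa only [iSup_of_empty] using ha
  · have hFx' : UpperSemicontinuous fun k => F (k, x') := hF.comp (by fun_prop)
    obtain ⟨k, -, hk⟩ := (hFx'.upperSemicontinuousOn univ).exists_isMaxOn univ_nonempty
      isCompact_univ
    exact (iSup_le fun k' => hk (mem_univ k')).trans_lt (hx' k (mem_univ k))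

section LinearMinorant

variable {E : Type*} [AddCommGroup E] {p : E → ℝ} {c : ℝ}

lemma map_nonneg_of_add_const_le_monotone [PartialOrder E] [IsOrderedAddMonoid E] {l : E →+ ℝ}
    (hp : Monotone p) (hle : ∀ h, l h + c ≤ p h) {k : E} (hk : 0 ≤ k) : 0 ≤ l k := by
  by_contra! hneg
  obtain ⟨n, hn⟩ := exists_lt_nsmul (neg_pos.2 hneg) (p 0 - c)
  have hle_zero : l (-(n • k)) + c ≤ p 0 :=
    (hle _).trans (hp (neg_nonpos.2 (nsmul_nonneg hk n)))
  rw [map_neg, map_nsmul] at hle_zero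
  rw [smul_neg] at hn
  linarith

lemma map_eq_one_of_add_const_le [Module ℝ E] {l : E →ₗ[ℝ] ℝ} {e : E}
    (hp : ∀ t : ℝ, p (t • e) = p 0 + t) (hle : ∀ h, l h + c ≤ p h) : l e = 1 := by
  have hline (t : ℝ) : t * (l e - 1) ≤ p 0 - c := by
    have h := hle (t • e)
    rw [hp, map_smul, smul_eq_mul] at h
    linarith
  by_contra hne
  have h := hline ((p 0 - c + 1) / (l e - 1))
  rw [div_mul_cancel₀ _ (sub_ne_zero.2 hne)] at h
  linarith

end LinearMinorant

section RealFunctional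

variable {Y : Type*} [TopologicalSpace Y] [CompactSpace Y]

lemma le_add_const_dist (g₁ g₂ : C(Y, ℝ)) : g₁ ≤ g₂ + ContinuousMap.const Y (dist g₁ g₂) := by
  intro y
  have h : g₁ y - g₂ y ≤ dist g₁ g₂ :=
    (le_abs_self _).trans (ContinuousMap.dist_apply_le_dist (f := g₁) (g := g₂) y)
  exact sub_le_iff_le_add'.1 h

lemma lipschitzWith_one_of_monotone_of_map_add_const {p : C(Y, ℝ) → ℝ} (hmono : Monotone p)
    (hconst : ∀ g c, p (g + ContinuousMap.const Y c) = p g + c) : LipschitzWith 1 p :=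
  LipschitzWith.of_le_add fun g₁ g₂ =>
    (hmono (le_add_const_dist g₁ g₂)).trans_eq (hconst g₂ _)

variable [T2Space Y] [MeasurableSpace Y] [BorelSpace Y]

lemma exists_probabilityMeasure_integral_eq (l : C(Y, ℝ) →ₗ[ℝ] ℝ) (hpos : ∀ g, 0 ≤ g → 0 ≤ l g)
    (hone : l 1 = 1) :
    ∃ σ : ProbabilityMeasure Y, ∀ g : C(Y, ℝ), ∫ y, g y ∂(σ : Measure Y) = l g := by
  let Λ : CompactlySupportedContinuousMap Y ℝ →ₚ[ℝ] ℝ :=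
    { toFun g := l (g : C(Y, ℝ))
      map_add' g g' := l.map_add (g : C(Y, ℝ)) g'
      map_smul' c g := l.map_smul c (g : C(Y, ℝ))
      monotone' g g' hgg' := by
        have hsub := hpos ((g' : C(Y, ℝ)) - g) fun y => sub_nonneg.2 (hgg' y)
        rw [map_sub] at hsub
        exact sub_nonneg.1 hsub }
  have hint (g : C(Y, ℝ)) : ∫ y, g y ∂(RealRMK.rieszMeasure Λ) = l g :=
    RealRMK.integral_rieszMeasure Λ (CompactlySupportedContinuousMap.continuousMapEquiv g)
  have hprob : IsProbabilityMeasure (RealRMK.rieszMeasure Λ) := by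
    have hmass := hint 1
    simp only [hone, ContinuousMap.one_apply, integral_const, smul_eq_mul, mul_one] at hmass
    exact ⟨by rwa [measureReal_def, ENNReal.toReal_eq_one_iff] at hmass⟩
  exact ⟨⟨_, hprob⟩, hint⟩

lemma exists_probabilityMeasure_integral_add_le_of_lt {p : C(Y, ℝ) → ℝ} (hmono : Monotone p)
    (hconst : ∀ g c, p (g + ContinuousMap.const Y c) = p g + c) (hconv : ConvexOn ℝ univ p)
    {g : C(Y, ℝ)} {a : ℝ} (ha : a < p g) :
    ∃ (σ : ProbabilityMeasure Y) (b : ℝ),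
      (∀ h : C(Y, ℝ), ∫ y, h y ∂(σ : Measure Y) + b ≤ p h) ∧
        ∫ y, g y ∂(σ : Measure Y) + b = a := by
  have hcont := (lipschitzWith_one_of_monotone_of_map_add_const hmono hconst).continuous
  obtain ⟨l, b, hl, hlg⟩ := hconv.exists_affine_le_of_lt (𝕜 := ℝ) (mem_univ g) ha isClosed_univ
    (hcont.lowerSemicontinuous.lowerSemicontinuousOn _)
  have hle (h : C(Y, ℝ)) : l h + b ≤ p h := hl ⟨h, mem_univ h⟩
  have hpos (k : C(Y, ℝ)) (hk : 0 ≤ k) : 0 ≤ l k :=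
    map_nonneg_of_add_const_le_monotone (l := (l : C(Y, ℝ) →+ ℝ)) hmono hle hk
  have hone : l 1 = 1 := by
    refine map_eq_one_of_add_const_le (l := l.toLinearMap) (fun t => ?_) hle
    rw [← hconst, zero_add]
    congr 1
    ext
    simp
  obtain ⟨σ, hσ⟩ := exists_probabilityMeasure_integral_eq l.toLinearMap hpos hone
  exact ⟨σ, b, fun h => (congrArg (· + b) (hσ h)).trans_le (hle h),
    (congrArg (· + b) (hσ g)).trans hlg⟩

end RealFunctional

section AffineMinorant

variable {Y : Type*} [TopologicalSpace Y] [MeasurableSpace Y]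

/-- The affine functional `h ↦ ∫ h dσ + b` lies below `p`. The envelope `kenv T · x` is the
supremum of these minorants of `h ↦ T h x`. -/
def IsAffineMinorant (σ : ProbabilityMeasure Y) (b : ℝ) (p : C(Y, ℝ) → EReal) : Prop :=
  ∀ h : C(Y, ℝ), ((∫ y, h y ∂(σ : Measure Y) + b : ℝ) : EReal) ≤ p h

lemma iSup_integral_sub_ne_top_iff {σ : ProbabilityMeasure Y} {p : C(Y, ℝ) → EReal} :
    (⨆ h : C(Y, ℝ), ((∫ y, h y ∂(σ : Measure Y) : ℝ) : EReal) - p h) ≠ ⊤ ↔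
      ∃ b, IsAffineMinorant σ b p := by
  have hiff (b : ℝ) : IsAffineMinorant σ b p ↔
      (⨆ h : C(Y, ℝ), ((∫ y, h y ∂(σ : Measure Y) : ℝ) : EReal) - p h) ≤ ((-b : ℝ) : EReal) := by
    rw [iSup_le_iff]
    refine forall_congr' fun h => ?_
    rw [EReal.sub_le_iff_le_add (by simp) (by simp), add_comm _ (p h), EReal.coe_neg,
      ← sub_eq_add_neg, EReal.le_sub_iff_add_le (by simp) (by simp), EReal.coe_add]
  simp only [hiff]
  constructor
  · intro hne
    obtain ⟨r, hr, -⟩ := EReal.lt_iff_exists_real_btwn.1 (lt_top_iff_ne_top.2 hne)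
    exact ⟨-r, by simpa only [neg_neg] using hr.le⟩
  · rintro ⟨b, hb⟩
    exact (hb.trans_lt (EReal.coe_lt_top _)).ne

end AffineMinorant

section Envelope

variable {X Y : Type*} [TopologicalSpace Y] [CompactSpace Y] [MeasurableSpace Y]
  [OpensMeasurableSpace Y] {S T : C(Y, ℝ) → X → EReal} {x : X}

lemma integrable_continuousMap_s19 {F : Type*} [NormedAddCommGroup F]
    [SecondCountableTopologyEither Y F] (μ : Measure Y) [IsFiniteMeasure μ] (g : C(Y, F)) :
    Integrable g μ :=
  g.continuous.integrable_of_hasCompactSupport (HasCompactSupport.of_compactSpace _)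

lemma integral_continuousMap_add_const {μ : Measure Y} [IsProbabilityMeasure μ] (g : C(Y, ℝ))
    (c : ℝ) :
    ∫ y, (g + ContinuousMap.const Y c) y ∂μ = ∫ y, g y ∂μ + c := by
  simp [integral_add (integrable_continuousMap_s19 μ g) (integrable_const c)]

lemma monotone_integral_continuousMap (μ : Measure Y) [IsFiniteMeasure μ] :
    Monotone fun g : C(Y, ℝ) => ∫ y, g y ∂μ :=
  fun g₁ g₂ hg => integral_mono (integrable_continuousMap_s19 μ g₁) (integrable_continuousMap_s19 μ g₂) hg

lemma continuous_integral_continuousMap (μ : Measure Y) [IsProbabilityMeasure μ] :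
    Continuous fun g : C(Y, ℝ) => ∫ y, g y ∂μ :=
  (lipschitzWith_one_of_monotone_of_map_add_const (monotone_integral_continuousMap μ)
    integral_continuousMap_add_const).continuous

lemma isAffineMinorant_iff_le_iInf (σ : ProbabilityMeasure Y) (b : ℝ) (p : C(Y, ℝ) → EReal)
    (g : C(Y, ℝ)) :
    IsAffineMinorant σ b p ↔ ((∫ y, g y ∂(σ : Measure Y) + b : ℝ) : EReal) ≤
      ⨅ h : C(Y, ℝ), ((∫ y, (g y - h y) ∂(σ : Measure Y) : ℝ) : EReal) + p h := by
  rw [le_iInf_iff]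
  refine forall_congr' fun h => ?_
  rw [add_comm _ (p h), ← EReal.sub_le_iff_le_add (by simp) (by simp), ← EReal.coe_sub,
    integral_sub (integrable_continuousMap_s19 _ g) (integrable_continuousMap_s19 _ h)]
  ring_nf

lemma kenv_eq_iSup_isAffineMinorant (T : C(Y, ℝ) → X → EReal) (g : C(Y, ℝ)) (x : X) :
    kenv T g x = ⨆ (σ : ProbabilityMeasure Y) (b : ℝ) (_ : IsAffineMinorant σ b (T · x)),
      ((∫ y, g y ∂(σ : Measure Y) + b : ℝ) : EReal) := by
  refine iSup_congr fun σ => le_antisymm (EReal.ge_of_forall_gt_iff_ge.1 fun r hr => ?_)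
    (iSup₂_le fun b hb => (isAffineMinorant_iff_le_iInf σ b _ g).1 hb)
  have hr_eq : ∫ y, g y ∂(σ : Measure Y) + (r - ∫ y, g y ∂(σ : Measure Y)) = r :=
    add_sub_cancel _ _
  rw [← hr_eq] at hr ⊢
  exact le_iSup₂_of_le _ ((isAffineMinorant_iff_le_iInf σ _ _ g).2 hr.le) le_rfl

lemma kenv_le_iff {g : C(Y, ℝ)} {a : EReal} :
    kenv T g x ≤ a ↔ ∀ σ b, IsAffineMinorant σ b (T · x) →
      ((∫ y, g y ∂(σ : Measure Y) + b : ℝ) : EReal) ≤ a := by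
  simp only [kenv_eq_iSup_isAffineMinorant, iSup_le_iff]

lemma IsAffineMinorant.le_kenv {σ : ProbabilityMeasure Y} {b : ℝ}
    (h : IsAffineMinorant σ b (T · x)) (g : C(Y, ℝ)) :
    ((∫ y, g y ∂(σ : Measure Y) + b : ℝ) : EReal) ≤ kenv T g x :=
  kenv_le_iff.1 le_rfl σ b h

lemma kenv_le (T : C(Y, ℝ) → X → EReal) (g : C(Y, ℝ)) (x : X) : kenv T g x ≤ T g x :=
  kenv_le_iff.2 fun _ _ h => h g

lemma kenv_le_kenv (hST : ∀ h, S h x ≤ T h x) (g : C(Y, ℝ)) : kenv S g x ≤ kenv T g x :=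
  kenv_le_iff.2 fun _ _ h => IsAffineMinorant.le_kenv (fun k => (h k).trans (hST k)) g

lemma monotone_kenv (T : C(Y, ℝ) → X → EReal) (x : X) : Monotone (kenv T · x) := by
  refine fun g₁ g₂ hg => kenv_le_iff.2 fun σ b h => ?_
  calc ((∫ y, g₁ y ∂(σ : Measure Y) + b : ℝ) : EReal)
      ≤ ((∫ y, g₂ y ∂(σ : Measure Y) + b : ℝ) : EReal) :=
        EReal.coe_le_coe_iff.2 (add_le_add_left (monotone_integral_continuousMap _ hg) b)
    _ ≤ kenv T g₂ x := h.le_kenv g₂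

lemma kenv_add_const (T : C(Y, ℝ) → X → EReal) (g : C(Y, ℝ)) (c : ℝ) (x : X) :
    kenv T (g + ContinuousMap.const Y c) x = kenv T g x + c := by
  have hle (g : C(Y, ℝ)) (c : ℝ) : kenv T (g + ContinuousMap.const Y c) x ≤ kenv T g x + c := by
    refine kenv_le_iff.2 fun σ b h => ?_
    calc ((∫ y, (g + ContinuousMap.const Y c) y ∂(σ : Measure Y) + b : ℝ) : EReal)
        = ((∫ y, g y ∂(σ : Measure Y) + b : ℝ) : EReal) + c := by
          rw [integral_continuousMap_add_const, add_right_comm, EReal.coe_add]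
      _ ≤ kenv T g x + c := by gcongr; exact h.le_kenv g
  refine le_antisymm (hle g c) ?_
  have hge := hle (g + ContinuousMap.const Y c) (-c)
  have hg : g + ContinuousMap.const Y c + ContinuousMap.const Y (-c) = g := by ext; simp
  rwa [hg, EReal.coe_neg, ← sub_eq_add_neg, EReal.le_sub_iff_add_le (by simp) (by simp)] at hge

lemma kenv_smul_add_smul_le (T : C(Y, ℝ) → X → EReal) (g₁ g₂ : C(Y, ℝ)) {s t : ℝ} (hs : 0 ≤ s)
    (ht : 0 ≤ t) (hst : s + t = 1) (x : X) :
    kenv T (s • g₁ + t • g₂) x ≤ s * kenv T g₁ x + t * kenv T g₂ x := by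
  refine kenv_le_iff.2 fun σ b h => ?_
  have hint : ∫ y, (s • g₁ + t • g₂) y ∂(σ : Measure Y) + b =
      s * (∫ y, g₁ y ∂(σ : Measure Y) + b) + t * (∫ y, g₂ y ∂(σ : Measure Y) + b) := by
    simp only [ContinuousMap.add_apply, ContinuousMap.smul_apply, smul_eq_mul]
    rw [integral_add ((integrable_continuousMap_s19 _ g₁).const_mul s)
      ((integrable_continuousMap_s19 _ g₂).const_mul t), integral_const_mul, integral_const_mul]
    linear_combination (-b) * hst
  rw [hint, EReal.coe_add, EReal.coe_mul, EReal.coe_mul]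
  have := EReal.coe_nonneg.2 hs
  have := EReal.coe_nonneg.2 ht
  gcongr
  exacts [h.le_kenv g₁, h.le_kenv g₂]

lemma lowerSemicontinuous_kenv (T : C(Y, ℝ) → X → EReal) (x : X) :
    LowerSemicontinuous (kenv T · x) := by
  simp only [kenv_eq_iSup_isAffineMinorant]
  refine lowerSemicontinuous_iSup fun σ => lowerSemicontinuous_biSup fun b _ => ?_
  exact (continuous_coe_real_ereal.comp
    ((continuous_integral_continuousMap _).add continuous_const)).lowerSemicontinuous

end Envelope

section BackwardKantorovich

variable {X Y : Type*} [TopologicalSpace X] [TopologicalSpace Y] [CompactSpace Y]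

namespace IsBackwardKantorovich

variable {S : C(Y, ℝ) → X → EReal}

lemma eq_bot_of_eq_bot (hS : IsBackwardKantorovich S) {h : C(Y, ℝ)} {x : X} (hh : S h x = ⊥)
    (g : C(Y, ℝ)) : S g x = ⊥ := by
  obtain ⟨-, hmono, hconst, -, -⟩ := hS
  have hle := hmono g _ (le_add_const_dist g h) x
  rwa [hconst, hh, EReal.bot_add, le_bot_iff] at hle

lemma exists_real_of_ne_bot (hS : IsBackwardKantorovich S) {g : C(Y, ℝ)} {x : X}
    (hg : S g x ≠ ⊥) :
    ∃ p : C(Y, ℝ) → ℝ, (∀ h, S h x = p h) ∧ Monotone p ∧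
      (∀ g c, p (g + ContinuousMap.const Y c) = p g + c) ∧ ConvexOn ℝ univ p := by
  have hbot (h : C(Y, ℝ)) : S h x ≠ ⊥ := fun hh => hg (hS.eq_bot_of_eq_bot hh g)
  obtain ⟨husc, hmono, hconst, hconv, -⟩ := hS
  have htop (h : C(Y, ℝ)) : S h x ≠ ⊤ := by
    obtain ⟨-, ⟨M, hM⟩, -⟩ := husc h
    exact ((hM x).trans_lt (EReal.coe_lt_top M)).ne
  choose p hp using fun h => CanLift.prf (β := ℝ) (S h x) ⟨htop h, hbot h⟩
  refine ⟨p, fun h => (hp h).symm, fun g₁ g₂ hg => ?_, fun g c => ?_, convex_univ,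
    fun g₁ _ g₂ _ s t hs ht hst => ?_⟩
  · exact EReal.coe_le_coe_iff.1 (by simpa only [hp] using hmono g₁ g₂ hg x)
  · exact EReal.coe_eq_coe_iff.1 (by simpa only [hp, EReal.coe_add] using hconst g c x)
  · obtain rfl : t = 1 - s := by linarith
    refine EReal.coe_le_coe_iff.1 ?_
    simpa only [hp, EReal.coe_add, EReal.coe_mul, smul_eq_mul] using
      hconv g₁ g₂ s hs (by linarith) x

lemma le_kenv [T2Space Y] [MeasurableSpace Y] [BorelSpace Y] (hS : IsBackwardKantorovich S)
    (g : C(Y, ℝ)) (x : X) : S g x ≤ kenv S g x := by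
  rcases eq_or_ne (S g x) ⊥ with hbot | hbot
  · exact hbot.trans_le bot_le
  obtain ⟨p, hp, hmono, hconst, hconv⟩ := hS.exists_real_of_ne_bot hbot
  refine EReal.ge_of_forall_gt_iff_ge.1 fun a ha => ?_
  rw [hp, EReal.coe_lt_coe_iff] at ha
  obtain ⟨σ, b, hle, rfl⟩ :=
    exists_probabilityMeasure_integral_add_le_of_lt hmono hconst hconv ha
  have hminorant : IsAffineMinorant σ b (S · x) := fun h => by
    simpa only [hp] using EReal.coe_le_coe_iff.2 (hle h)
  exact hminorant.le_kenv g

end IsBackwardKantorovich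

variable [T2Space Y] [MeasurableSpace Y] [BorelSpace Y] {T : C(Y, ℝ) → X → EReal}

lemma upperSemicontinuous_kenv (hT : ∀ h, UpperSemicontinuous (T h)) (g : C(Y, ℝ)) :
    UpperSemicontinuous (kenv T g) := by
  refine upperSemicontinuous_iSup_of_compactSpace (K := ProbabilityMeasure Y)
    (F := fun q => ⨅ h : C(Y, ℝ),
      ((∫ y, (g y - h y) ∂(q.1 : Measure Y) : ℝ) : EReal) + T h q.2) ?_
  refine upperSemicontinuous_iInf fun h => ?_
  have hcont : Continuous fun q : ProbabilityMeasure Y × X =>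
      ((∫ y, (g y - h y) ∂(q.1 : Measure Y) : ℝ) : EReal) :=
    continuous_coe_real_ereal.comp
      ((ProbabilityMeasure.continuous_integral_continuousMap (g - h)).comp continuous_fst)
  exact hcont.upperSemicontinuous.add' ((hT h).comp continuous_snd)
    fun q => EReal.continuousAt_add (by simp) (by simp)

lemma isUSCb_kenv (husc : ∀ h, IsUSCb (T h)) {x : X} {σ : ProbabilityMeasure Y} {b : ℝ}
    (hσ : IsAffineMinorant σ b (T · x)) (g : C(Y, ℝ)) : IsUSCb (kenv T g) := by
  obtain ⟨-, ⟨M, hM⟩, -⟩ := husc g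
  exact ⟨upperSemicontinuous_kenv (fun h => (husc h).1) g,
    ⟨M, fun x' => (kenv_le T g x').trans (hM x')⟩,
    ⟨x, ((EReal.bot_lt_coe _).trans_le (hσ.le_kenv g)).ne'⟩⟩

lemma isBackwardKantorovich_kenv (husc : ∀ h, IsUSCb (T h)) {x : X} {σ : ProbabilityMeasure Y}
    {b : ℝ} (hσ : IsAffineMinorant σ b (T · x)) : IsBackwardKantorovich (kenv T) :=
  ⟨isUSCb_kenv husc hσ, fun _ _ hg x => monotone_kenv T x hg, kenv_add_const T,
    fun g₁ g₂ _ hl₀ hl₁ x =>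
      kenv_smul_add_smul_le T g₁ g₂ hl₀ (sub_nonneg.2 hl₁) (add_sub_cancel _ _) x,
    fun g _ hgn x =>
      ((lowerSemicontinuous_kenv T x).le_liminf g).trans (liminf_le_liminf_of_le hgn)⟩

end BackwardKantorovich

theorem kantorovich_envelope_general
    {X Y : Type*} [TopologicalSpace X]
    [TopologicalSpace Y] [CompactSpace Y] [T2Space Y] [MeasurableSpace Y] [BorelSpace Y]
    (T : C(Y, ℝ) → X → EReal)
    (husc : ∀ g, IsUSCb (T g))
    (hstd : ∃ (x : X) (ν : ProbabilityMeasure Y),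
      (⨆ g : C(Y, ℝ), (((∫ y, g y ∂(ν : Measure Y)) : ℝ) : EReal) - T g x) ≠ ⊤) :
    (∀ (g : C(Y, ℝ)) (x : X), kenv T g x ≤ T g x) ∧
    IsBackwardKantorovich (kenv T) ∧
    (∀ S : C(Y, ℝ) → X → EReal, IsBackwardKantorovich S →
      (∀ (g : C(Y, ℝ)) (x : X), S g x ≤ T g x) →
      ∀ (g : C(Y, ℝ)) (x : X), S g x ≤ kenv T g x) ∧
    ((∀ (g : C(Y, ℝ)) (x : X), kenv T g x = T g x) ↔ IsBackwardKantorovich T) := by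
  obtain ⟨x₀, ν, hν⟩ := hstd
  obtain ⟨b, hb⟩ := iSup_integral_sub_ne_top_iff.1 hν
  have hkenv : IsBackwardKantorovich (kenv T) := isBackwardKantorovich_kenv husc hb
  have hlargest {S : C(Y, ℝ) → X → EReal} (hS : IsBackwardKantorovich S)
      (hST : ∀ g x, S g x ≤ T g x) (g : C(Y, ℝ)) (x : X) : S g x ≤ kenv T g x :=
    (hS.le_kenv g x).trans (kenv_le_kenv (fun h => hST h x) g)
  refine ⟨kenv_le T, hkenv, fun S => hlargest, fun heq => ?_, fun hT g x => ?_⟩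
  · rwa [show kenv T = T from funext₂ heq] at hkenv
  · exact le_antisymm (kenv_le T g x) (hlargest hT (fun _ _ => le_rfl) g x)

/-- **The Kantorovich envelope.**  For a standard map `T : C(Y) → USC(X)`, the
envelope `⎵T` is the largest backward Kantorovich operator below `T`, and
`T = ⎵T` precisely when `T` is itself a backward Kantorovich operator. -/
theorem kantorovich_envelope
    {X Y : Type*} [MetricSpace X] [CompactSpace X] [MeasurableSpace X] [BorelSpace X]
    [MetricSpace Y] [CompactSpace Y] [MeasurableSpace Y] [BorelSpace Y]
    (T : C(Y, ℝ) → X → EReal)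
    (husc : ∀ g, IsUSCb (T g))
    (hstd : ∀ x : X, ∃ ν : ProbabilityMeasure Y,
      (⨆ g : C(Y, ℝ), (((∫ y, g y ∂(ν : Measure Y)) : ℝ) : EReal) - T g x) ≠ ⊤) :
    (∀ (g : C(Y, ℝ)) (x : X), kenv T g x ≤ T g x) ∧
    IsBackwardKantorovich (kenv T) ∧
    (∀ S : C(Y, ℝ) → X → EReal, IsBackwardKantorovich S →
      (∀ (g : C(Y, ℝ)) (x : X), S g x ≤ T g x) →
      ∀ (g : C(Y, ℝ)) (x : X), S g x ≤ kenv T g x) ∧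
    ((∀ (g : C(Y, ℝ)) (x : X), kenv T g x = T g x) ↔ IsBackwardKantorovich T) := by
  obtain ⟨-, -, x, -⟩ := husc 0
  exact kantorovich_envelope_general T husc ⟨x, hstd x⟩
end
end
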